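/- Let Ω ⊂ ℝ^N be an open bounded set with Lipschitz boundary and φ a metric integrand. If u ∈ BV_φ(Ω) is a function of φ-least gradient in Ω, then ∫_Ω |Du|_φ ≤ ∫_{∂Ω} φ(x, ν(x)) |Tu(x)| dH^{N-1}(x), where ν is the outer unit normal to ∂Ω. -/

import Mathlib

open MeasureTheory Metric Set Bornology Filter
open scoped ENNReal NNReal RealInnerProductSpace Topology

noncomputable section

abbrev Euc (N : ℕ) := EuclideanSpace ℝ (Fin N)

def divg {N : ℕ} (z : Euc N → Euc N) (x : Euc N) : ℝ :=
  ∑ i : Fin N, fderiv ℝ z x (EuclideanSpace.single i 1) i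

def polarFn {N : ℕ} (φ : Euc N → Euc N → ℝ) (x zs : Euc N) : ℝ :=
  sSup {r : ℝ | ∃ ξ, φ x ξ ≤ 1 ∧ r = ⟪zs, ξ⟫}

def phiTV {N : ℕ} (φ : Euc N → Euc N → ℝ) (Ω : Set (Euc N)) (u : Euc N → ℝ) : ℝ≥0∞ :=
  ⨆ (z : Euc N → Euc N) (_ : ContDiff ℝ 1 z) (_ : HasCompactSupport z)
    (_ : tsupport z ⊆ Ω) (_ : ∀ x, polarFn φ x (z x) ≤ 1),
    ENNReal.ofReal (∫ x in Ω, u x * divg z x)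

def TV {N : ℕ} (Ω : Set (Euc N)) (u : Euc N → ℝ) : ℝ≥0∞ :=
  ⨆ (z : Euc N → Euc N) (_ : ContDiff ℝ 1 z) (_ : HasCompactSupport z)
    (_ : tsupport z ⊆ Ω) (_ : ∀ x, ‖z x‖ ≤ 1),
    ENNReal.ofReal (∫ x in Ω, u x * divg z x)

def MetricIntegrand {N : ℕ} (φ : Euc N → Euc N → ℝ) (Ω : Set (Euc N)) (lam Lam : ℝ) : Prop :=
  ContinuousOn (fun p : Euc N × Euc N => φ p.1 p.2) (closure Ω ×ˢ univ) ∧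
  (∀ x ∈ closure Ω, ConvexOn ℝ univ (φ x)) ∧
  (∀ x ∈ closure Ω, ∀ (t : ℝ) (ξ : Euc N), φ x (t • ξ) = |t| * φ x ξ) ∧
  0 < lam ∧ 0 < Lam ∧
  (∀ x ∈ closure Ω, ∀ ξ : Euc N, lam * ‖ξ‖ ≤ φ x ξ ∧ φ x ξ ≤ Lam * ‖ξ‖)

def HasLipschitzBoundary {N : ℕ} (Ω : Set (Euc N)) : Prop :=
  ∀ x ∈ frontier Ω, ∃ (ν : Euc N) (U : Set (Euc N)) (g : Euc N → ℝ) (L : ℝ≥0),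
    ‖ν‖ = 1 ∧ IsOpen U ∧ x ∈ U ∧ LipschitzWith L g ∧
    ∀ y ∈ U, (y ∈ Ω ↔ g (y - ⟪y, ν⟫ • ν) < ⟪y, ν⟫)

def IsTrace {N : ℕ} (Ω : Set (Euc N)) (u f : Euc N → ℝ) : Prop :=
  ∀ᵐ x ∂((μH[(N : ℝ) - 1] : Measure (Euc N)).restrict (frontier Ω)),
    Filter.Tendsto (fun r : ℝ => ⨍ y in ball x r ∩ Ω, |u y - f x| ∂volume)
      (𝓝[>] (0:ℝ)) (𝓝 0)

def IsLeastGradient {N : ℕ} (Ω : Set (Euc N)) (u : Euc N → ℝ) : Prop :=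
  ∀ v : Euc N → ℝ, HasCompactSupport v → tsupport v ⊆ Ω → TV Ω u ≤ TV Ω (u + v)

def IsPhiLeastGradient {N : ℕ} (φ : Euc N → Euc N → ℝ) (Ω : Set (Euc N)) (u : Euc N → ℝ) : Prop :=
  ∀ v : Euc N → ℝ, HasCompactSupport v → tsupport v ⊆ Ω → phiTV φ Ω u ≤ phiTV φ Ω (u + v)

def IsLeastGradientLoc {N : ℕ} (Ω : Set (Euc N)) (u : Euc N → ℝ) : Prop :=
  ∀ v : Euc N → ℝ, HasCompactSupport v → tsupport v ⊆ Ω →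
    ∀ U : Set (Euc N), IsOpen U → Bornology.IsBounded U → tsupport v ⊆ U → U ⊆ Ω →
      TV U u ≤ TV U (u + v)

def Perim {N : ℕ} (E U : Set (Euc N)) : ℝ≥0∞ :=
  TV U (E.indicator (fun _ => (1:ℝ)))

def IsOuterUnitNormal {N : ℕ} (Ω : Set (Euc N)) (ν : Euc N → Euc N) : Prop :=
  ∀ x ∈ frontier Ω, ‖ν x‖ = 1 ∧
    Filter.Tendsto
      (fun r : ℝ => volume (Ω ∩ ball x r ∩ {y | 0 < ⟪y - x, ν x⟫}) / volume (ball x r))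
      (𝓝[>] (0:ℝ)) (𝓝 0)

/-- The pointwise form of the constraint `polarFn φ x (z x) ≤ 1`. -/
lemma inner_le_of_polar {N : ℕ} {φ : Euc N → Euc N → ℝ} {Ω : Set (Euc N)} {lam Lam : ℝ}
    (hφ : MetricIntegrand φ Ω lam Lam) {x z : Euc N} (hx : x ∈ closure Ω)
    (h : polarFn φ x z ≤ 1) (ξ : Euc N) : ⟪z, ξ⟫ ≤ φ x ξ := by
  obtain ⟨-, -, hhom, hlam, -, hbd⟩ := hφ
  have hb : BddAbove {r : ℝ | ∃ ξ, φ x ξ ≤ 1 ∧ r = ⟪z, ξ⟫} := by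
    refine ⟨‖z‖ * lam⁻¹, ?_⟩
    rintro r ⟨ξ, h1, rfl⟩
    have h2 := (hbd x hx ξ).1
    refine (real_inner_le_norm _ _).trans ?_
    gcongr
    rw [← one_div, le_div_iff₀ hlam]
    linarith
  by_cases hξ : ξ = 0
  · subst hξ
    have := hhom x hx 0 0
    simp at this
    simp [this]
  · have hpos : 0 < φ x ξ := lt_of_lt_of_le (mul_pos hlam (norm_pos_iff.2 hξ)) (hbd x hx ξ).1
    have h3 : φ x ((φ x ξ)⁻¹ • ξ) ≤ 1 := by
      rw [hhom x hx, abs_of_pos (inv_pos.2 hpos), inv_mul_cancel₀ hpos.ne']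
    have h4 : ⟪z, (φ x ξ)⁻¹ • ξ⟫ ≤ 1 := (le_csSup hb ⟨_, h3, rfl⟩).trans h
    rw [inner_smul_right, inv_mul_le_iff₀ hpos] at h4
    linarith

lemma polar_le_of_inner {N : ℕ} {φ : Euc N → Euc N → ℝ} {x z : Euc N}
    (h : ∀ ξ, ⟪z, ξ⟫ ≤ φ x ξ) : polarFn φ x z ≤ 1 := by
  apply Real.sSup_le _ zero_le_one
  rintro r ⟨ξ, h1, rfl⟩
  exact (h ξ).trans h1

lemma polar_zero_le {N : ℕ} {φ : Euc N → Euc N → ℝ} {x : Euc N} : polarFn φ x 0 ≤ 1 := by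
  apply Real.sSup_le _ zero_le_one
  rintro r ⟨ξ, h1, rfl⟩
  simp

lemma polar_le_of_norm {N : ℕ} {φ : Euc N → Euc N → ℝ} {Ω : Set (Euc N)} {lam Lam : ℝ}
    (hφ : MetricIntegrand φ Ω lam Lam) {x z : Euc N} (hx : x ∈ closure Ω)
    (h : ‖z‖ ≤ lam) : polarFn φ x z ≤ 1 := by
  apply polar_le_of_inner
  intro ξ
  refine (real_inner_le_norm _ _).trans (le_trans ?_ (hφ.2.2.2.2.2 x hx ξ).1)
  gcongr

/-- Admissible test fields for `phiTV`. -/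
structure Adm {N : ℕ} (φ : Euc N → Euc N → ℝ) (Ω : Set (Euc N)) (z : Euc N → Euc N) : Prop where
  cd : ContDiff ℝ 1 z
  cs : HasCompactSupport z
  ts : tsupport z ⊆ Ω
  pol : ∀ x, polarFn φ x (z x) ≤ 1

lemma Adm.le_phiTV {N : ℕ} {φ : Euc N → Euc N → ℝ} {Ω : Set (Euc N)} {z : Euc N → Euc N}
    (hz : Adm φ Ω z) (u : Euc N → ℝ) :
    ENNReal.ofReal (∫ x in Ω, u x * divg z x) ≤ phiTV φ Ω u := by
  unfold phiTV
  exact le_iSup_of_le z (le_iSup_of_le hz.cd (le_iSup_of_le hz.cs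
    (le_iSup_of_le hz.ts (le_iSup_of_le hz.pol le_rfl))))

lemma phiTV_le {N : ℕ} {φ : Euc N → Euc N → ℝ} {Ω : Set (Euc N)} {u : Euc N → ℝ} {c : ℝ≥0∞}
    (h : ∀ z, Adm φ Ω z → ENNReal.ofReal (∫ x in Ω, u x * divg z x) ≤ c) : phiTV φ Ω u ≤ c := by
  unfold phiTV
  exact iSup_le fun z => iSup_le fun h1 => iSup_le fun h2 => iSup_le fun h3 => iSup_le fun h4 =>
    h z ⟨h1, h2, h3, h4⟩

lemma divg_continuous {N : ℕ} {z : Euc N → Euc N} (hz : ContDiff ℝ 1 z) :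
    Continuous (divg z) := by
  unfold divg
  refine continuous_finsetSum _ fun i _ => ?_
  have := hz.continuous_fderiv (by norm_num)
  fun_prop

lemma divg_hasCompactSupport {N : ℕ} {z : Euc N → Euc N} (hz : HasCompactSupport z) :
    HasCompactSupport (divg z) := by
  refine HasCompactSupport.mono' (f := z) hz ?_
  intro x hx
  by_contra hxz
  apply hx
  have : fderiv ℝ z x = 0 := by
    by_contra h0
    exact hxz (support_fderiv_subset ℝ (f := z) h0)
  simp [divg, this]

lemma divg_bdd {N : ℕ} {z : Euc N → Euc N} (hz : ContDiff ℝ 1 z) (hc : HasCompactSupport z) :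
    ∃ C : ℝ, ∀ x, ‖divg z x‖ ≤ C :=
  (divg_continuous hz).bounded_above_of_compact_support (divg_hasCompactSupport hc)

lemma integrable_mul_divg {N : ℕ} {μ : Measure (Euc N)} {u : Euc N → ℝ} (hu : Integrable u μ)
    {z : Euc N → Euc N} (hz : ContDiff ℝ 1 z) (hc : HasCompactSupport z) :
    Integrable (fun x => u x * divg z x) μ := by
  obtain ⟨C, hC⟩ := divg_bdd hz hc
  exact hu.mul_bdd (c := C) (divg_continuous hz).aestronglyMeasurable (Eventually.of_forall hC)

lemma divg_add {N : ℕ} {z w : Euc N → Euc N} (hz : ContDiff ℝ 1 z) (hw : ContDiff ℝ 1 w)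
    (x : Euc N) : divg (z + w) x = divg z x + divg w x := by
  unfold divg
  rw [fderiv_add (hz.differentiable (by norm_num) x) (hw.differentiable (by norm_num) x)]
  simp [Finset.sum_add_distrib]

lemma divg_smul {N : ℕ} {χ : Euc N → ℝ} {z : Euc N → Euc N} (hχ : ContDiff ℝ 1 χ)
    (hz : ContDiff ℝ 1 z) (x : Euc N) :
    divg (fun y => χ y • z y) x = χ x * divg z x + fderiv ℝ χ x (z x) := by
  unfold divg
  rw [fderiv_fun_smul (hχ.differentiable (by norm_num) x) (hz.differentiable (by norm_num) x)]
  have h1 : fderiv ℝ χ x (z x) = ∑ i, fderiv ℝ χ x (EuclideanSpace.single i 1) * z x i := by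
    have : z x = ∑ i, (z x i) • (EuclideanSpace.single i (1:ℝ) : Euc N) := by
      ext j
      simp [Finset.sum_apply, Pi.single_apply]
    conv_lhs => rw [this]
    simp [mul_comm]
  rw [h1]
  simp [Finset.sum_add_distrib, Finset.mul_sum]

lemma divg_const_smul {N : ℕ} {θ : Euc N → ℝ} (hθ : ContDiff ℝ 1 θ) (h : Euc N) (x : Euc N) :
    divg (fun y => θ y • h) x = fderiv ℝ θ x h := by
  rw [divg_smul hθ contDiff_const]
  simp [divg]

/-- Concentration of the total variation on compact sets. -/
lemma exists_compact_small {N : ℕ} {φ : Euc N → Euc N → ℝ} {Ω : Set (Euc N)} {u : Euc N → ℝ}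
    (hu1 : IntegrableOn u Ω volume) (hu2 : phiTV φ Ω u ≠ ⊤) {δ : ℝ} (hδ : 0 < δ) :
    ∃ K : Set (Euc N), IsCompact K ∧ K ⊆ Ω ∧
      ∀ z, Adm φ Ω z → Disjoint (tsupport z) K → ∫ x in Ω, u x * divg z x ≤ δ := by
  have hz0 : ∃ z₀, Adm φ Ω z₀ ∧ (phiTV φ Ω u).toReal ≤ (∫ x in Ω, u x * divg z₀ x) + δ := by
    by_contra! hcon
    have hadm0 : Adm φ Ω (0 : Euc N → Euc N) :=
      ⟨contDiff_const, HasCompactSupport.zero, by simp [tsupport], fun x => polar_zero_le⟩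
    have hpos : δ < (phiTV φ Ω u).toReal := by
      have := hcon 0 hadm0
      simpa [divg, Pi.zero_def] using this
    have : phiTV φ Ω u ≤ ENNReal.ofReal ((phiTV φ Ω u).toReal - δ) :=
      phiTV_le fun z hz => ENNReal.ofReal_le_ofReal (by linarith [hcon z hz])
    have h2 := ENNReal.toReal_mono ENNReal.ofReal_ne_top this
    rw [ENNReal.toReal_ofReal (by linarith)] at h2
    linarith
  obtain ⟨z₀, h0, h1⟩ := hz0
  refine ⟨tsupport z₀, h0.cs, h0.ts, fun z hz hd => ?_⟩
  have hadm : Adm φ Ω (z₀ + z) := by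
    refine ⟨h0.cd.add hz.cd, h0.cs.add hz.cs, ?_, fun x => ?_⟩
    · exact (tsupport_add _ _).trans (union_subset h0.ts hz.ts)
    · by_cases hx : x ∈ tsupport z₀
      · have : z x = 0 := image_eq_zero_of_notMem_tsupport (disjoint_right.1 hd hx)
        simpa [this] using h0.pol x
      · have : z₀ x = 0 := image_eq_zero_of_notMem_tsupport hx
        simpa [this] using hz.pol x
  have h2 := ENNReal.toReal_mono hu2 (hadm.le_phiTV u)
  have h3 : ∫ x in Ω, u x * divg (z₀ + z) x
      = (∫ x in Ω, u x * divg z₀ x) + ∫ x in Ω, u x * divg z x := by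
    rw [← integral_add (integrable_mul_divg hu1 h0.cd h0.cs) (integrable_mul_divg hu1 hz.cd hz.cs)]
    congr 1; ext x
    rw [divg_add h0.cd hz.cd]; ring
  rw [h3] at h2
  have h4 := ENNReal.toReal_ofReal_eq_iff (a := (∫ x in Ω, u x * divg z₀ x) + ∫ x in Ω, u x * divg z x)
  have h5 := Real.le_coe_toNNReal ((∫ x in Ω, u x * divg z₀ x) + ∫ x in Ω, u x * divg z x)
  have h6 : (∫ x in Ω, u x * divg z₀ x) + ∫ x in Ω, u x * divg z x ≤ (phiTV φ Ω u).toReal :=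
    h5.trans h2
  linarith

/-- A sequence of bump functions shrinking to the origin. -/
def bmp (N : ℕ) (k : ℕ) : ContDiffBump (0 : Euc N) where
  rIn := 1 / (2 * ((k : ℝ) + 1))
  rOut := 1 / ((k : ℝ) + 1)
  rIn_pos := by positivity
  rIn_lt_rOut := by
    apply one_div_lt_one_div_of_lt <;> nlinarith [(Nat.cast_nonneg k : (0:ℝ) ≤ k)]

/-- Mollification. -/
def mol {N : ℕ} (k : ℕ) (g : Euc N → ℝ) : Euc N → ℝ :=
  MeasureTheory.convolution ((bmp N k).normed volume) g (ContinuousLinearMap.lsmul ℝ ℝ) volume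

lemma mol_apply {N : ℕ} (k : ℕ) (g : Euc N → ℝ) (x : Euc N) :
    mol k g x = ∫ t, (bmp N k).normed volume t * g (x - t) := by
  simp [mol, convolution_def]

lemma mol_contDiff {N : ℕ} (k : ℕ) {g : Euc N → ℝ} (hg : LocallyIntegrable g volume) :
    ContDiff ℝ 1 (mol k g) :=
  HasCompactSupport.contDiff_convolution_left (n := 1) _
    (bmp N k).hasCompactSupport_normed ((bmp N k).contDiff_normed (n := 1)) hg

lemma mol_ae_tendsto {N : ℕ} {g : Euc N → ℝ} (hg : LocallyIntegrable g volume) :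
    ∀ᵐ x, Tendsto (fun k => mol k g x) atTop (𝓝 (g x)) := by
  refine ContDiffBump.ae_convolution_tendsto_right_of_locallyIntegrable (φ := bmp N) (K := 2)
    ?_ ?_ hg
  · exact tendsto_one_div_add_atTop_nhds_zero_nat
  · refine Eventually.of_forall fun k => ?_
    simp only [bmp]
    field_simp
    exact le_rfl

lemma mol_integrable {N : ℕ} (k : ℕ) {g : Euc N → ℝ} (hg : LocallyIntegrable g volume)
    (x : Euc N) : Integrable (fun t => (bmp N k).normed volume t * g (x - t)) volume := by
  have := HasCompactSupport.convolutionExists_left (ContinuousLinearMap.lsmul ℝ ℝ)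
    (bmp N k).hasCompactSupport_normed ((bmp N k).continuous_normed (μ := volume)) hg x
  simpa [ConvolutionExistsAt] using this

lemma mol_mono_bound {N : ℕ} (k : ℕ) {g : Euc N → ℝ} (hg : LocallyIntegrable g volume)
    {c : ℝ} (x : Euc N) (h : ∀ t, |g t - c| ≤ 1) : |mol k g x - c| ≤ 1 := by
  have h1 : mol k g x - c = ∫ t, (bmp N k).normed volume t * (g (x - t) - c) := by
    simp_rw [mul_sub]
    rw [integral_sub (mol_integrable k hg x)
      (((bmp N k).integrable_normed).mul_const c), integral_mul_const,
      (bmp N k).integral_normed, mol_apply]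
    ring
  rw [h1, ← Real.norm_eq_abs]
  refine (norm_integral_le_of_norm_le ((bmp N k).integrable_normed (μ := volume)) ?_).trans
    (bmp N k).integral_normed.le
  refine Eventually.of_forall fun t => ?_
  rw [norm_mul, Real.norm_of_nonneg ((bmp N k).nonneg_normed t), Real.norm_eq_abs]
  exact mul_le_of_le_one_right ((bmp N k).nonneg_normed t) (h _)

lemma mol_mem_Icc {N : ℕ} (k : ℕ) {g : Euc N → ℝ} (hg : LocallyIntegrable g volume)
    (x : Euc N) (h : ∀ t, 0 ≤ g t ∧ g t ≤ 1) : 0 ≤ mol k g x ∧ mol k g x ≤ 1 := by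
  have h0 := mol_mono_bound k hg (c := 0) x (fun t => by rw [abs_le]; constructor <;> linarith [h t])
  have h1 := mol_mono_bound k hg (c := 1) x (fun t => by rw [abs_le]; constructor <;> linarith [h t])
  rw [abs_le] at h0 h1
  constructor <;> linarith

lemma mol_eq_zero {N : ℕ} (k : ℕ) {g : Euc N → ℝ} (x : Euc N)
    (h : ∀ y ∈ ball x (1 / ((k : ℝ) + 1)), g y = 0) : mol k g x = 0 := by
  rw [mol_apply]
  rw [integral_eq_zero_of_ae]
  refine Eventually.of_forall fun t => ?_
  by_cases ht : t ∈ ball (0 : Euc N) (1 / ((k : ℝ) + 1))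
  · have : g (x - t) = 0 := by
      apply h
      simpa [dist_eq_norm] using ht
    simp [this]
  · have : (bmp N k).normed volume t = 0 := by
      by_contra h0
      apply ht
      have : t ∈ Function.support ((bmp N k).normed volume) := h0
      rwa [(bmp N k).support_normed_eq] at this
    simp [this]

lemma mol_lipschitz {N : ℕ} (k : ℕ) {g : Euc N → ℝ} {C : ℝ≥0} (hg : LipschitzWith C g) :
    LipschitzWith C (mol k g) := by
  have hli : LocallyIntegrable g volume := hg.continuous.locallyIntegrable
  refine LipschitzWith.of_dist_le_mul fun x y => ?_
  rw [dist_eq_norm, mol_apply, mol_apply,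
    ← integral_sub (mol_integrable k hli x) (mol_integrable k hli y)]
  have hb := ((bmp N k).integrable_normed (μ := volume)).mul_const (C * dist x y)
  refine (norm_integral_le_of_norm_le hb ?_).trans ?_
  · refine Eventually.of_forall fun t => ?_
    rw [← mul_sub, norm_mul, Real.norm_of_nonneg ((bmp N k).nonneg_normed t)]
    gcongr
    · exact (bmp N k).nonneg_normed t
    · have := hg.dist_le_mul (x - t) (y - t)
      simpa [dist_eq_norm] using this
  · rw [integral_mul_const, (bmp N k).integral_normed, one_mul]

lemma mol_fderiv {N : ℕ} (k : ℕ) {g : Euc N → ℝ} {C : ℝ≥0} (hg : LipschitzWith C g)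
    (x v : Euc N) : fderiv ℝ (mol k g) x v = mol k (fun y => lineDeriv ℝ g y v) x := by
  have hli : LocallyIntegrable g volume := hg.continuous.locallyIntegrable
  have hd : HasFDerivAt (mol k g) (fderiv ℝ (mol k g) x) x :=
    ((mol_contDiff k hli).differentiable (by norm_num) x).hasFDerivAt
  have h1 : HasDerivAt (fun s : ℝ => mol k g (x + s • v)) (fderiv ℝ (mol k g) x v) 0 := by
    have := hd.hasLineDerivAt v
    exact this
  have hmeas : AEStronglyMeasurable (fun y => lineDeriv ℝ g y v) (volume : Measure (Euc N)) :=
    aestronglyMeasurable_lineDeriv hg.continuous volume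
  have h2 := hasDerivAt_integral_of_dominated_loc_of_lip (μ := (volume : Measure (Euc N)))
    (F := fun (s : ℝ) (t : Euc N) => (bmp N k).normed volume t * g (x + s • v - t))
    (F' := fun t => (bmp N k).normed volume t * lineDeriv ℝ g (x - t) v)
    (x₀ := (0 : ℝ)) (s := univ) (bound := fun t => (bmp N k).normed volume t * (C * ‖v‖))
    Filter.univ_mem
    (Eventually.of_forall fun s => (mol_integrable k hli (x + s • v)).aestronglyMeasurable)
    (mol_integrable k hli (x + (0:ℝ) • v)) ?_ ?_ ?_ ?_
  · have h3 := h2.2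
    simp_rw [← mol_apply] at h3
    exact h1.unique h3
  · exact ((bmp N k).integrable_normed).aestronglyMeasurable.mul
      (hmeas.comp_measurePreserving (Measure.measurePreserving_sub_left volume x))
  · refine Eventually.of_forall fun t => ?_
    refine LipschitzOnWith.of_dist_le_mul fun a _ b _ => ?_
    rw [dist_eq_norm, ← mul_sub, norm_mul, Real.coe_nnabs,
      abs_of_nonneg (mul_nonneg ((bmp N k).nonneg_normed t) (by positivity)),
      Real.norm_of_nonneg ((bmp N k).nonneg_normed t), mul_assoc]
    gcongr
    · exact (bmp N k).nonneg_normed t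
    · have := hg.dist_le_mul (x + a • v - t) (x + b • v - t)
      rw [dist_eq_norm, dist_eq_norm] at this
      refine this.trans (le_of_eq ?_)
      have : x + a • v - t - (x + b • v - t) = (a - b) • v := by rw [sub_smul]; abel
      rw [this, norm_smul, dist_eq_norm]; ring
  · exact ((bmp N k).integrable_normed).mul_const _
  · have h4 : ∀ᵐ t : Euc N, LineDifferentiableAt ℝ g (x - t) v :=
      (Measure.measurePreserving_sub_left volume x).quasiMeasurePreserving.ae
        (hg.ae_lineDifferentiableAt v)
    filter_upwards [h4] with t ht
    have h5 : HasDerivAt (fun s : ℝ => g (x - t + s • v)) (lineDeriv ℝ g (x - t) v) 0 :=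
      ht.hasLineDerivAt
    have h6 := h5.const_mul ((bmp N k).normed volume t)
    refine h6.congr_of_eventuallyEq (Eventually.of_forall fun s => ?_)
    simp only
    congr 2
    abel

/-- Smooth approximation of Lipschitz functions. -/
lemma mol_fderiv_tendsto {N : ℕ} {g : Euc N → ℝ} {C : ℝ≥0} (hg : LipschitzWith C g) :
    ∀ᵐ x, ∀ v, Tendsto (fun k => fderiv ℝ (mol k g) x v) atTop (𝓝 (fderiv ℝ g x v)) := by
  have h1 : ∀ᵐ x, ∀ i : Fin N, Tendsto
      (fun k => fderiv ℝ (mol k g) x (EuclideanSpace.single i 1)) atTop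
      (𝓝 (fderiv ℝ g x (EuclideanSpace.single i 1))) := by
    rw [ae_all_iff]
    intro i
    filter_upwards [mol_ae_tendsto (hg.locallyIntegrable_lineDeriv (EuclideanSpace.single i 1)),
      hg.ae_differentiableAt] with x hx hdx
    simp_rw [mol_fderiv _ hg]
    rwa [hdx.lineDeriv_eq_fderiv] at hx
  filter_upwards [h1] with x hx v
  have : v = ∑ i, (v i) • (EuclideanSpace.single i (1:ℝ) : Euc N) := by
    ext j
    simp [Finset.sum_apply, Pi.single_apply]
  rw [this]
  simp only [map_sum, map_smul]
  exact tendsto_finsetSum _ fun i _ => (hx i).const_smul (v i)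

lemma mol_tendsto {N : ℕ} {g : Euc N → ℝ} (hg : Continuous g) (x : Euc N) :
    Tendsto (fun k => mol k g x) atTop (𝓝 (g x)) := by
  refine ContDiffBump.convolution_tendsto_right_of_continuous (φ := bmp N) ?_ hg x
  exact tendsto_one_div_add_atTop_nhds_zero_nat

lemma MetricIntegrand.nonneg {N : ℕ} {φ : Euc N → Euc N → ℝ} {Ω : Set (Euc N)} {lam Lam : ℝ}
    (hφ : MetricIntegrand φ Ω lam Lam) {x : Euc N} (hx : x ∈ closure Ω) (ξ : Euc N) :
    0 ≤ φ x ξ :=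
  le_trans (mul_nonneg hφ.2.2.2.1.le (norm_nonneg _)) (hφ.2.2.2.2.2 x hx ξ).1

lemma MetricIntegrand.neg {N : ℕ} {φ : Euc N → Euc N → ℝ} {Ω : Set (Euc N)} {lam Lam : ℝ}
    (hφ : MetricIntegrand φ Ω lam Lam) {x : Euc N} (hx : x ∈ closure Ω) (ξ : Euc N) :
    φ x (-ξ) = φ x ξ := by
  have := hφ.2.2.1 x hx (-1) ξ
  simpa using this

lemma Adm.smul {N : ℕ} {φ : Euc N → Euc N → ℝ} {Ω : Set (Euc N)} {lam Lam : ℝ}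
    (hφ : MetricIntegrand φ Ω lam Lam) {z : Euc N → Euc N} (hz : Adm φ Ω z)
    {χ : Euc N → ℝ} (hχ : ContDiff ℝ 1 χ) (h01 : ∀ x, 0 ≤ χ x ∧ χ x ≤ 1) :
    Adm φ Ω (fun x => χ x • z x) := by
  refine ⟨hχ.smul hz.cd, HasCompactSupport.mono hz.cs (Function.support_smul_subset_right χ z), (tsupport_smul_subset_right χ z).trans hz.ts, fun x => ?_⟩
  by_cases hx : x ∈ Ω
  · apply polar_le_of_inner
    intro ξ
    have h1 := inner_le_of_polar hφ (subset_closure hx) (hz.pol x) ξ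
    have h2 := hφ.nonneg (subset_closure hx) ξ
    rw [real_inner_smul_left]
    nlinarith [(h01 x).1, (h01 x).2]
  · have : z x = 0 := image_eq_zero_of_notMem_tsupport (fun h => hx (hz.ts h))
    simp only [this, smul_zero]
    exact polar_zero_le

lemma cutoff_bound {N : ℕ} {φ : Euc N → Euc N → ℝ} {Ω : Set (Euc N)} {lam Lam : ℝ}
    (hφ : MetricIntegrand φ Ω lam Lam) (hΩo : IsOpen Ω) (hΩb : Bornology.IsBounded Ω)
    {u : Euc N → ℝ} (hu1 : IntegrableOn u Ω volume) (hlg : IsPhiLeastGradient φ Ω u)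
    {δ : ℝ} (hδ : 0 ≤ δ) {K : Set (Euc N)}
    (hK : ∀ z, Adm φ Ω z → Disjoint (tsupport z) K → ∫ x in Ω, u x * divg z x ≤ δ)
    {χ : Euc N → ℝ} {C : ℝ≥0} (hχ : LipschitzWith C χ) (h01 : ∀ x, 0 ≤ χ x ∧ χ x ≤ 1)
    {κ : ℝ} (hκ : 0 < κ) (hχ1 : ∀ y ∈ Ω, ∀ q ∈ frontier Ω, dist y q < κ → χ y = 1)
    (hχ0 : ∀ y ∈ thickening κ K, χ y = 0) :
    phiTV φ Ω u ≤ ENNReal.ofReal δ +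
      ∫⁻ x in Ω, ENNReal.ofReal (|u x| * φ x (gradient χ x)) := by
  classical
  set v : Euc N → ℝ := fun y => if y ∈ Ω then (χ y - 1) * u y else 0 with hv
  have hclos : tsupport v ⊆ closure Ω ∩ {y | ∀ q ∈ frontier Ω, κ ≤ dist y q} := by
    have hcl : IsClosed (closure Ω ∩ {y | ∀ q ∈ frontier Ω, κ ≤ dist y q}) := by
      refine isClosed_closure.inter ?_
      simp only [Set.ofPred_forall]
      refine isClosed_iInter fun q => isClosed_iInter fun _ => ?_
      exact isClosed_le continuous_const (continuous_id.dist continuous_const)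
    refine closure_minimal ?_ hcl
    intro y hy
    have hyΩ : y ∈ Ω := by
      by_contra h
      exact hy (by simp [hv, h])
    refine ⟨subset_closure hyΩ, fun q hq => ?_⟩
    by_contra! hlt
    apply hy
    simp [hv, hχ1 y hyΩ q hq hlt]
  have hsub : tsupport v ⊆ Ω := by
    intro y hy
    obtain ⟨h1, h2⟩ := hclos hy
    by_contra hyΩ
    have hfr : y ∈ frontier Ω := by
      rw [frontier, hΩo.interior_eq]; exact ⟨h1, hyΩ⟩
    have := h2 y hfr
    simp at this
    linarith
  have hcomp : HasCompactSupport v :=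
    Metric.isCompact_of_isClosed_isBounded (isClosed_tsupport v) (hΩb.subset hsub)
  refine (hlg v hcomp hsub).trans (phiTV_le fun z hz => ?_)
  have e1 : ∫ x in Ω, (u + v) x * divg z x = ∫ x in Ω, χ x * (u x * divg z x) := by
    refine setIntegral_congr_fun hΩo.measurableSet fun x hx => ?_
    simp only [hv, Pi.add_apply, if_pos hx]
    ring
  rw [e1]
  have hint := integrable_mul_divg (μ := volume.restrict Ω) hu1 hz.cd hz.cs
  have hχli : LocallyIntegrable χ volume := hχ.continuous.locallyIntegrable
  have hmc : ∀ k, ContDiff ℝ 1 (mol k χ) := fun k => mol_contDiff k hχli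
  obtain ⟨Cz, hCz⟩ := hz.cd.continuous.bounded_above_of_compact_support hz.cs
  have hCz0 : 0 ≤ Cz := (norm_nonneg _).trans (hCz 0)
  -- limits
  have hA : Tendsto (fun k => ∫ x in Ω, mol k χ x * (u x * divg z x)) atTop
      (𝓝 (∫ x in Ω, χ x * (u x * divg z x))) := by
    refine tendsto_integral_of_dominated_convergence (fun x => ‖u x * divg z x‖) ?_ hint.norm ?_ ?_
    · intro k
      exact (hmc k).continuous.aestronglyMeasurable.mul hint.aestronglyMeasurable
    · intro k
      refine Eventually.of_forall fun x => ?_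
      rw [norm_mul]
      refine mul_le_of_le_one_left (norm_nonneg _) ?_
      have := mol_mem_Icc k hχli x h01
      rw [Real.norm_of_nonneg this.1]
      exact this.2
    · exact Eventually.of_forall fun x => (mol_tendsto hχ.continuous x).mul_const _
  have hfd : ∀ (f : Euc N → ℝ), LipschitzWith C f → ∀ x, ‖fderiv ℝ f x (z x)‖ ≤ C * Cz := by
    intro f hf x
    refine (ContinuousLinearMap.le_opNorm _ _).trans ?_
    exact mul_le_mul (norm_fderiv_le_of_lipschitz ℝ hf) (hCz x) (norm_nonneg _) C.2
  have hB : Tendsto (fun k => ∫ x in Ω, u x * fderiv ℝ (mol k χ) x (z x)) atTop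
      (𝓝 (∫ x in Ω, u x * fderiv ℝ χ x (z x))) := by
    refine tendsto_integral_of_dominated_convergence (fun x => ‖u x‖ * (C * Cz)) ?_
      (hu1.norm.mul_const _) ?_ ?_
    · intro k
      refine hu1.aestronglyMeasurable.mul (Continuous.aestronglyMeasurable ?_)
      exact ((hmc k).continuous_fderiv (by norm_num)).clm_apply hz.cd.continuous
    · intro k
      refine Eventually.of_forall fun x => ?_
      rw [norm_mul]
      gcongr
      exact hfd _ (mol_lipschitz k hχ) x
    · filter_upwards [ae_restrict_of_ae (mol_fderiv_tendsto hχ)] with x hx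
      exact (hx (z x)).const_mul _
  have hle : ∀ᶠ k : ℕ in atTop, (∫ x in Ω, mol k χ x * (u x * divg z x))
      + (∫ x in Ω, u x * fderiv ℝ (mol k χ) x (z x)) ≤ δ := by
    have hev : ∀ᶠ k : ℕ in atTop, 1 / ((k : ℝ) + 1) < κ / 2 :=
      (tendsto_order.1 tendsto_one_div_add_atTop_nhds_zero_nat).2 _ (half_pos hκ)
    filter_upwards [hev] with k hk
    have hadm : Adm φ Ω (fun x => mol k χ x • z x) :=
      hz.smul hφ (hmc k) (fun x => mol_mem_Icc k hχli x h01)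
    have hdis : Disjoint (tsupport fun x => mol k χ x • z x) K := by
      have : tsupport (fun x => mol k χ x • z x) ⊆ (thickening (κ / 2) K)ᶜ := by
        refine closure_minimal ?_ isOpen_thickening.isClosed_compl
        intro y hy hyK
        apply hy
        have : mol k χ y = 0 := by
          apply mol_eq_zero
          intro y' hy'
          apply hχ0
          obtain ⟨q, hq, hyq⟩ := mem_thickening_iff.1 hyK
          refine mem_thickening_iff.2 ⟨q, hq, ?_⟩
          rw [mem_ball] at hy'
          linarith [dist_triangle y' y q]
        simp [this]
      refine disjoint_left.2 fun y hy hyK => this hy (self_subset_thickening (half_pos hκ) K hyK)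
    have h1 := hK _ hadm hdis
    refine le_trans (le_of_eq ?_) h1
    rw [← integral_add]
    · refine integral_congr_ae (Eventually.of_forall fun x => ?_)
      simp only [divg_smul (hmc k) hz.cd]
      ring
    · refine hint.bdd_mul (c := 1) (hmc k).continuous.aestronglyMeasurable
        (Eventually.of_forall fun x => ?_)
      have := mol_mem_Icc k hχli x h01
      rw [Real.norm_of_nonneg this.1]
      exact this.2
    · refine hu1.mul_bdd (c := C * Cz) ?_ (Eventually.of_forall fun x => ?_)
      · exact (((hmc k).continuous_fderiv (by norm_num)).clm_apply
          hz.cd.continuous).aestronglyMeasurable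
      · exact hfd _ (mol_lipschitz k hχ) x
  have hlim := le_of_tendsto (hA.add hB) hle
  have hfin : ∫ x in Ω, χ x * (u x * divg z x) ≤ δ + ∫ x in Ω, ‖u x * fderiv ℝ χ x (z x)‖ := by
    have := norm_integral_le_integral_norm (μ := volume.restrict Ω)
      (fun x => u x * fderiv ℝ χ x (z x))
    have h2 := neg_abs_le (∫ x in Ω, u x * fderiv ℝ χ x (z x))
    rw [Real.norm_eq_abs] at this
    linarith
  refine (ENNReal.ofReal_le_ofReal hfin).trans ?_
  rw [ENNReal.ofReal_add hδ (integral_nonneg fun _ => norm_nonneg _)]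
  gcongr
  rw [ofReal_integral_norm_eq_lintegral_enorm]
  · refine setLIntegral_mono_ae' hΩo.measurableSet (Eventually.of_forall fun x hx => ?_)
    rw [← ofReal_norm]
    apply ENNReal.ofReal_le_ofReal
    rw [norm_mul, Real.norm_eq_abs]
    gcongr
    have hxc := subset_closure hx
    have h3 : fderiv ℝ χ x (z x) = ⟪z x, gradient χ x⟫ := by
      rw [real_inner_comm, gradient, InnerProductSpace.toDual_symm_apply]
    rw [h3, Real.norm_eq_abs, abs_le]
    have h4 := inner_le_of_polar hφ hxc (hz.pol x) (gradient χ x)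
    have h5 := inner_le_of_polar hφ hxc (hz.pol x) (-gradient χ x)
    rw [hφ.neg hxc, inner_neg_right] at h5
    constructor <;> linarith
  · refine hu1.mul_bdd (c := C * Cz) ?_ (Eventually.of_forall fun x => ?_)
    · refine aestronglyMeasurable_of_tendsto_ae (u := atTop)
        (f := fun k x => fderiv ℝ (mol k χ) x (z x)) ?_ ?_
      · intro k
        exact (((hmc k).continuous_fderiv (by norm_num)).clm_apply
          hz.cd.continuous).aestronglyMeasurable
      · filter_upwards [ae_restrict_of_ae (mol_fderiv_tendsto hχ)] with x hx
        exact hx (z x)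
    · exact hfd _ hχ x

lemma lintegral_enorm_compact_le_of_test {N : ℕ} {S C : Set (Euc N)} (hS : IsOpen S)
    (hC : IsCompact C) (hCS : C ⊆ S)
    {w : Euc N → ℝ} (hwm : Measurable w) (hw : Integrable w volume) {c : ℝ}
    (h : ∀ θ : Euc N → ℝ, ContDiff ℝ 1 θ → HasCompactSupport θ → tsupport θ ⊆ S →
      (∀ x, |θ x| ≤ 1) → ∫ x, w x * θ x ≤ c) :
    ∫⁻ x in C, ‖w x‖ₑ ≤ ENNReal.ofReal c := by
  classical
  obtain ⟨η, hη, hηS⟩ := hC.exists_cthickening_subset_open hS hCS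
  set sg : Euc N → ℝ := fun x => if 0 ≤ w x then 1 else -1 with hsg
  have hsgm : Measurable sg :=
    Measurable.ite (measurableSet_le measurable_const hwm) measurable_const measurable_const
  have hsg1 : ∀ x, |sg x| ≤ 1 := by
    intro x; simp only [hsg]; split_ifs <;> simp
  set g : Euc N → ℝ := C.indicator sg with hg
  have hgm : Measurable g := hsgm.indicator hC.measurableSet
  have hg1 : ∀ x, |g x| ≤ 1 := by
    intro x
    by_cases hx : x ∈ C
    · simp [hg, hx, hsg1 x]
    · simp [hg, hx]
  have hgi : Integrable g volume := by
    rw [hg, integrable_indicator_iff hC.measurableSet]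
    refine Measure.integrableOn_of_bounded (M := 1) hC.measure_lt_top.ne
      hsgm.aestronglyMeasurable (Eventually.of_forall fun x => ?_)
    simpa using hsg1 x
  have hgl := hgi.locallyIntegrable
  have hlim : Tendsto (fun k => ∫ x, w x * mol k g x) atTop (𝓝 (∫ x, w x * g x)) := by
    refine tendsto_integral_of_dominated_convergence (fun x => ‖w x‖) ?_ hw.norm ?_ ?_
    · exact fun k => hwm.aestronglyMeasurable.mul (mol_contDiff k hgl).continuous.aestronglyMeasurable
    · intro k
      refine Eventually.of_forall fun x => ?_
      rw [norm_mul]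
      refine mul_le_of_le_one_right (norm_nonneg _) ?_
      have := mol_mono_bound k hgl (c := 0) x (by simpa using hg1)
      simpa using this
    · filter_upwards [mol_ae_tendsto hgl] with x hx
      exact hx.const_mul _
  have hle : ∀ᶠ k : ℕ in atTop, ∫ x, w x * mol k g x ≤ c := by
    have hev : ∀ᶠ k : ℕ in atTop, 1 / ((k : ℝ) + 1) < η :=
      (tendsto_order.1 tendsto_one_div_add_atTop_nhds_zero_nat).2 _ hη
    filter_upwards [hev] with k hk
    have hts : tsupport (mol k g) ⊆ cthickening η C := by
      refine closure_minimal ?_ isClosed_cthickening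
      intro y hy
      by_contra hyC
      apply hy
      apply mol_eq_zero
      intro y' hy'
      have : y' ∉ C := by
        intro hC'
        apply hyC
        apply thickening_subset_cthickening
        rw [mem_thickening_iff]
        refine ⟨y', hC', ?_⟩
        rw [mem_ball, dist_comm] at hy'
        linarith
      simp [hg, this]
    refine h _ (mol_contDiff k hgl) ?_ (hts.trans hηS) ?_
    · exact IsCompact.of_isClosed_subset hC.cthickening (isClosed_tsupport _) hts
    · intro x
      have := mol_mono_bound k hgl (c := 0) x (by simpa using hg1)
      simpa using this
  have h1 := le_of_tendsto hlim hle
  have h2 : ∫ x, w x * g x = ∫ x in C, ‖w x‖ := by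
    rw [← integral_indicator hC.measurableSet]
    congr 1
    ext x
    by_cases hx : x ∈ C
    · simp only [hg, hx, indicator_of_mem, hsg]
      split_ifs with h0
      · rw [Real.norm_of_nonneg h0]; ring
      · rw [Real.norm_of_nonpos (not_le.1 h0).le]; ring
    · simp [hg, hx]
  rw [← ofReal_integral_norm_eq_lintegral_enorm hw.integrableOn, ← h2]
  exact ENNReal.ofReal_le_ofReal h1

/-- Duality: the `L¹` norm on an open set is controlled by testing against `C¹_c` functions. -/
lemma lintegral_enorm_le_of_test {N : ℕ} {S : Set (Euc N)} (hS : IsOpen S)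
    {w : Euc N → ℝ} (hwm : Measurable w) (hw : Integrable w volume) {c : ℝ}
    (h : ∀ θ : Euc N → ℝ, ContDiff ℝ 1 θ → HasCompactSupport θ → tsupport θ ⊆ S →
      (∀ x, |θ x| ≤ 1) → ∫ x, w x * θ x ≤ c) :
    ∫⁻ x in S, ‖w x‖ₑ ≤ ENNReal.ofReal c := by
  obtain ⟨F, hFc, hFS, hFU, hFm⟩ := hS.exists_iUnion_isClosed
  have hU : S = ⋃ n : ℕ, F n ∩ closedBall 0 (n : ℝ) := by
    ext x
    constructor
    · intro hx
      rw [← hFU] at hx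
      obtain ⟨n, hn⟩ := mem_iUnion.1 hx
      obtain ⟨m, hm⟩ := exists_nat_ge ‖x‖
      refine mem_iUnion.2 ⟨max n m, hFm (le_max_left _ _) hn, ?_⟩
      simp only [mem_closedBall, dist_zero_right]
      exact hm.trans (by exact_mod_cast le_max_right n m)
    · intro hx
      obtain ⟨n, hn⟩ := mem_iUnion.1 hx
      exact hFS n hn.1
  have hdir : Monotone fun n : ℕ => F n ∩ closedBall (0 : Euc N) (n : ℝ) := by
    intro a b hab
    exact inter_subset_inter (hFm hab) (closedBall_subset_closedBall (by exact_mod_cast hab))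
  rw [hU, setLIntegral_iUnion_of_directed _ hdir.directed_le]
  refine iSup_le fun n => ?_
  refine lintegral_enorm_compact_le_of_test hS ?_ (inter_subset_left.trans (hFS n)) hwm hw h
  exact (isCompact_closedBall _ _).inter_left (hFc n)

/-- Averages of a test function along a segment. -/
def segAvg {N : ℕ} (θ : Euc N → ℝ) (h : Euc N) (y : Euc N) : ℝ :=
  ∫ τ in (0:ℝ)..1, θ (y - τ • h)

lemma segAvg_hasFDerivAt {N : ℕ} {θ : Euc N → ℝ} (hθ : ContDiff ℝ 1 θ)
    (hc : HasCompactSupport θ) (h y : Euc N) :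
    HasFDerivAt (segAvg θ h) (∫ τ in (0:ℝ)..1, fderiv ℝ θ (y - τ • h)) y := by
  have hcont : Continuous (fderiv ℝ θ) := hθ.continuous_fderiv (by norm_num)
  obtain ⟨C, hC⟩ := hcont.bounded_above_of_compact_support (hc.fderiv ℝ)
  have := intervalIntegral.hasFDerivAt_integral_of_dominated_of_fderiv_le (𝕜 := ℝ)
    (μ := volume) (a := 0) (b := 1) (F := fun y τ => θ (y - τ • h))
    (F' := fun y τ => fderiv ℝ θ (y - τ • h)) (x₀ := y) (s := univ)
    (bound := fun _ => C) Filter.univ_mem ?_ ?_ ?_ ?_ ?_ ?_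
  · exact this
  · refine Eventually.of_forall fun x => ?_
    exact (hθ.continuous.comp (by fun_prop)).aestronglyMeasurable
  · exact (hθ.continuous.comp (by fun_prop)).intervalIntegrable _ _
  · exact (hcont.comp (by fun_prop)).aestronglyMeasurable
  · exact Eventually.of_forall fun τ _ x _ => hC _
  · exact _root_.intervalIntegrable_const
  · refine Eventually.of_forall fun τ _ x _ => ?_
    have h1 : HasFDerivAt θ (fderiv ℝ θ (x - τ • h)) (x - τ • h) :=
      (hθ.differentiable (by norm_num) _).hasFDerivAt
    have h2 : HasFDerivAt (fun x : Euc N => x - τ • h) (ContinuousLinearMap.id ℝ (Euc N)) x :=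
      (hasFDerivAt_id x).sub_const _
    exact h1.comp x h2

lemma segAvg_contDiff {N : ℕ} {θ : Euc N → ℝ} (hθ : ContDiff ℝ 1 θ)
    (hc : HasCompactSupport θ) (h : Euc N) : ContDiff ℝ 1 (segAvg θ h) := by
  rw [contDiff_one_iff_fderiv]
  have hcont : Continuous (fderiv ℝ θ) := hθ.continuous_fderiv (by norm_num)
  refine ⟨fun y => (segAvg_hasFDerivAt hθ hc h y).differentiableAt, ?_⟩
  have : fderiv ℝ (segAvg θ h) = fun y => ∫ τ in (0:ℝ)..1, fderiv ℝ θ (y - τ • h) :=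
    funext fun y => (segAvg_hasFDerivAt hθ hc h y).fderiv
  rw [this]
  refine intervalIntegral.continuous_parametric_intervalIntegral_of_continuous' ?_ 0 1
  simp only [Function.uncurry_def]
  exact hcont.comp (by fun_prop)

lemma segAvg_fderiv {N : ℕ} {θ : Euc N → ℝ} (hθ : ContDiff ℝ 1 θ)
    (hc : HasCompactSupport θ) (h y : Euc N) :
    fderiv ℝ (segAvg θ h) y h = θ y - θ (y - h) := by
  have hcont : Continuous (fderiv ℝ θ) := hθ.continuous_fderiv (by norm_num)
  have hc2 : Continuous fun τ : ℝ => fderiv ℝ θ (y - τ • h) := hcont.comp (by fun_prop)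
  rw [(segAvg_hasFDerivAt hθ hc h y).fderiv,
    ContinuousLinearMap.intervalIntegral_apply (hc2.intervalIntegrable _ _)]
  have hd : ∀ τ ∈ uIcc (0:ℝ) 1, HasDerivAt (fun τ : ℝ => -θ (y - τ • h))
      (fderiv ℝ θ (y - τ • h) h) τ := by
    intro τ _
    have h1 : HasFDerivAt θ (fderiv ℝ θ (y - τ • h)) (y - τ • h) :=
      (hθ.differentiable (by norm_num) _).hasFDerivAt
    have h2 : HasDerivAt (fun τ : ℝ => y - τ • h) (-h) τ := by
      have := ((hasDerivAt_id τ).smul_const h).const_sub y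
      simpa using this
    have h3 := (h1.comp_hasDerivAt τ h2).fun_neg
    simpa [Function.comp_def] using h3
  rw [intervalIntegral.integral_eq_sub_of_hasDerivAt hd
    ((hc2.clm_apply continuous_const).intervalIntegrable _ _)]
  simp
  ring

/-- Translation estimate. -/
lemma translation_bound {N : ℕ} {φ : Euc N → Euc N → ℝ} {Ω : Set (Euc N)} {lam Lam : ℝ}
    (hφ : MetricIntegrand φ Ω lam Lam)
    {u : Euc N → ℝ} (hum : Measurable u) (hu : Integrable u volume)
    {δ : ℝ} {K : Set (Euc N)}
    (hK : ∀ z, Adm φ Ω z → Disjoint (tsupport z) K → ∫ x in Ω, u x * divg z x ≤ δ)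
    {S : Set (Euc N)} (hS : IsOpen S) (h : Euc N)
    (hSh : ∀ y ∈ S, ∀ τ ∈ Icc (0:ℝ) 1, y + τ • h ∈ Ω \ K)
    {l : ℝ} (hl0 : 0 < l)
    (hl : ∀ y, ‖h‖ * volume.real {τ : ℝ | τ ∈ Ioc (0:ℝ) 1 ∧ y - τ • h ∈ S} ≤ l) :
    ∫⁻ y in S, ‖u (y + h) - u y‖ₑ ≤ ENNReal.ofReal (l / lam * δ) := by
  have hlam : 0 < lam := hφ.2.2.2.1
  have huh : Integrable (fun y => u (y + h)) volume := hu.comp_add_right h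
  refine lintegral_enorm_le_of_test hS ?_ (huh.sub hu) ?_
  · exact (hum.comp (measurable_id.add_const h)).sub hum
  intro θ hθ hθc hθS hθ1
  set κ : ℝ := lam / l with hκ
  have hκ0 : 0 < κ := div_pos hlam hl0
  set z : Euc N → Euc N := fun y => segAvg θ h y • (-κ • h) with hz
  have hcd := segAvg_contDiff hθ hθc h
  -- support
  have himg : IsCompact ((fun p : ℝ × Euc N => p.2 + p.1 • h) '' (Icc (0:ℝ) 1 ×ˢ tsupport θ)) :=
    (isCompact_Icc.prod hθc).image (by fun_prop)
  have hsup : tsupport z ⊆ (fun p : ℝ × Euc N => p.2 + p.1 • h) '' (Icc (0:ℝ) 1 ×ˢ tsupport θ) := by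
    refine closure_minimal ?_ himg.isClosed
    intro y hy
    by_contra hcon
    apply hy
    have : segAvg θ h y = 0 := by
      unfold segAvg
      rw [intervalIntegral.integral_congr (g := fun _ => (0:ℝ))]
      · simp
      · intro τ hτ
        rw [uIcc_of_le zero_le_one] at hτ
        by_contra h0
        apply hcon
        refine ⟨(τ, y - τ • h), ⟨hτ, subset_tsupport _ h0⟩, ?_⟩
        simp
    simp [hz, this]
  have hsub : tsupport z ⊆ Ω \ K := by
    intro y hy
    obtain ⟨⟨τ, y'⟩, ⟨hτ, hy'⟩, rfl⟩ := hsup hy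
    exact hSh y' (hθS hy') τ hτ
  have hnorm : ∀ y, ‖z y‖ ≤ lam := by
    intro y
    have hAm : MeasurableSet {τ : ℝ | τ ∈ Ioc (0:ℝ) 1 ∧ y - τ • h ∈ S} := by
      refine measurableSet_Ioc.inter ?_
      exact (hS.preimage (by fun_prop : Continuous fun τ : ℝ => y - τ • h)).measurableSet
    have h1 : |segAvg θ h y| ≤ volume.real {τ : ℝ | τ ∈ Ioc (0:ℝ) 1 ∧ y - τ • h ∈ S} := by
      unfold segAvg
      rw [intervalIntegral.integral_of_le zero_le_one,
        setIntegral_eq_of_subset_of_forall_sdiff_eq_zero measurableSet_Ioc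
          (s := {τ : ℝ | τ ∈ Ioc (0:ℝ) 1 ∧ y - τ • h ∈ S}) (fun τ hτ => hτ.1)]
      · rw [← Real.norm_eq_abs]
        have hfin : volume {τ : ℝ | τ ∈ Ioc (0:ℝ) 1 ∧ y - τ • h ∈ S} < ⊤ := by
          refine (measure_mono (t := Ioc (0:ℝ) 1) (fun τ hτ => hτ.1)).trans_lt ?_
          simp
        have := norm_setIntegral_le_of_norm_le_const (μ := volume) (C := 1)
          (f := fun τ : ℝ => θ (y - τ • h)) hfin (fun τ _ => by simpa using hθ1 _)
        simpa using this
      · intro τ hτ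
        by_contra h0
        exact hτ.2 ⟨hτ.1, hθS (subset_tsupport _ h0)⟩
    simp only [hz, norm_smul, norm_neg, Real.norm_eq_abs, abs_of_pos hκ0]
    have h2 := hl y
    have h3 : ‖h‖ * |segAvg θ h y| ≤ l := (mul_le_mul_of_nonneg_left h1 (norm_nonneg _)).trans h2
    calc |segAvg θ h y| * (κ * ‖h‖) = κ * (‖h‖ * |segAvg θ h y|) := by ring
      _ ≤ κ * l := by gcongr
      _ = lam := by rw [hκ]; field_simp
  have hadm : Adm φ Ω z := by
    refine ⟨hcd.smul contDiff_const, ?_, fun y hy => (hsub hy).1, fun y => ?_⟩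
    · exact IsCompact.of_isClosed_subset himg (isClosed_tsupport _) hsup
    · by_cases hy : y ∈ Ω
      · exact polar_le_of_norm hφ (subset_closure hy) (hnorm y)
      · have : z y = 0 := image_eq_zero_of_notMem_tsupport (fun h => hy (hsub h).1)
        rw [this]; exact polar_zero_le
  have hmain := hK z hadm (disjoint_left.2 fun y hy => (hsub hy).2)
  have hdiv : ∀ y, divg z y = κ * (θ (y - h) - θ y) := by
    intro y
    rw [hz, divg_const_smul hcd, map_smul, segAvg_fderiv hθ hθc]
    simp
    ring
  have hz0 : ∀ y, y ∉ Ω → u y * divg z y = 0 := by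
    intro y hy
    have : y ∉ tsupport (divg z) := by
      intro h'
      apply hy
      have h2 : tsupport (divg z) ⊆ tsupport z := by
        refine closure_minimal ?_ (isClosed_tsupport _)
        intro x hx
        by_contra hxz
        apply hx
        have : fderiv ℝ z x = 0 := by
          by_contra h0
          exact hxz (support_fderiv_subset ℝ (f := z) h0)
        simp [divg, this]
      exact (hsub (h2 h')).1
    rw [image_eq_zero_of_notMem_tsupport this, mul_zero]
  rw [setIntegral_eq_integral_of_forall_compl_eq_zero hz0] at hmain
  simp_rw [hdiv] at hmain
  obtain ⟨Cθ, hCθ⟩ := hθ.continuous.bounded_above_of_compact_support hθc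
  have hi1 : Integrable (fun y => u y * θ y) volume :=
    hu.mul_bdd (c := Cθ) hθ.continuous.aestronglyMeasurable (Eventually.of_forall hCθ)
  have hi2 : Integrable (fun y => u (y + h) * θ y) volume :=
    huh.mul_bdd (c := Cθ) hθ.continuous.aestronglyMeasurable (Eventually.of_forall hCθ)
  have hi3 : Integrable (fun y => u y * θ (y - h)) volume := by
    refine hu.mul_bdd (c := Cθ) ?_ (Eventually.of_forall fun y => hCθ _)
    exact (hθ.continuous.comp (by fun_prop)).aestronglyMeasurable
  have e1 : ∫ y, u y * θ (y - h) = ∫ y, u (y + h) * θ y := by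
    rw [← integral_add_right_eq_self (fun y => u y * θ (y - h)) h]
    simp
  have e2 : ∫ y, u y * (κ * (θ (y - h) - θ y)) = κ * ∫ y, (u (y + h) - u y) * θ y := by
    have : ∀ y, u y * (κ * (θ (y - h) - θ y)) = κ * (u y * θ (y - h) - u y * θ y) := by
      intro y; ring
    simp_rw [this, sub_mul]
    rw [integral_const_mul, integral_sub hi3 hi1, integral_sub hi2 hi1, e1]
  rw [e2] at hmain
  have : ∫ y, (u (y + h) - u y) * θ y ≤ δ / κ := by
    rw [le_div_iff₀ hκ0]; linarith
  refine this.trans (le_of_eq ?_)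
  rw [hκ]; field_simp

/-- A Lipschitz height function in direction `e`. -/
structure GChart {N : ℕ} (e : Euc N) (G : Euc N → ℝ) (M : ℝ≥0) : Prop where
  norm_e : ‖e‖ = 1
  lip : LipschitzWith M G
  add : ∀ (y : Euc N) (t : ℝ), G (y + t • e) = G y + t

/-- Projection on the graph along `e`. -/
def gproj {N : ℕ} (e : Euc N) (G : Euc N → ℝ) (y : Euc N) : Euc N := y - G y • e

namespace GChart

variable {N : ℕ} {e : Euc N} {G : Euc N → ℝ} {M : ℝ≥0}

lemma abs_sub_le (h : GChart e G M) (x y : Euc N) : |G x - G y| ≤ M * dist x y := by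
  have := h.lip.dist_le_mul x y
  rwa [Real.dist_eq] at this

lemma continuous (h : GChart e G M) : Continuous G := h.lip.continuous

lemma gproj_add (h : GChart e G M) (y : Euc N) (t : ℝ) :
    gproj e G (y + t • e) = gproj e G y := by
  simp only [gproj, h.add, add_smul]; abel

lemma G_gproj (h : GChart e G M) (y : Euc N) : G (gproj e G y) = 0 := by
  have := h.add y (-G y)
  rw [neg_smul, ← sub_eq_add_neg] at this
  simp only [gproj, this]; ring

lemma gproj_continuous (h : GChart e G M) : Continuous (gproj e G) :=
  continuous_id.sub (h.continuous.smul continuous_const)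

lemma dist_gproj (h : GChart e G M) (y : Euc N) : dist y (gproj e G y) = |G y| := by
  rw [dist_eq_norm, gproj, sub_sub_cancel, norm_smul, h.norm_e, mul_one, Real.norm_eq_abs]

lemma gproj_dist_le (h : GChart e G M) (x y : Euc N) :
    dist (gproj e G x) (gproj e G y) ≤ (1 + M) * dist x y := by
  rw [dist_eq_norm]
  have : gproj e G x - gproj e G y = (x - y) - (G x - G y) • e := by
    simp only [gproj, sub_smul]; abel
  rw [this]
  refine (norm_sub_le _ _).trans ?_
  rw [norm_smul, h.norm_e, mul_one, Real.norm_eq_abs, ← dist_eq_norm]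
  have := h.abs_sub_le x y
  linarith

lemma gproj_gproj (h : GChart e G M) (y : Euc N) : gproj e G (gproj e G y) = gproj e G y := by
  rw [gproj, h.G_gproj]; simp

end GChart

/-- Normalised Lebesgue measure on a ball centered at the origin. -/
def ballProb (N : ℕ) (r : ℝ) : Measure (Euc N) :=
  (volume (ball (0 : Euc N) r))⁻¹ • volume.restrict (ball (0 : Euc N) r)

lemma ballProb_prob {N : ℕ} {r : ℝ} (hr : 0 < r) : IsProbabilityMeasure (ballProb N r) := by
  constructor
  simp only [ballProb, Measure.smul_apply, Measure.restrict_apply_univ, smul_eq_mul]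
  exact ENNReal.inv_mul_cancel (measure_ball_pos _ _ hr).ne' measure_ball_lt_top.ne

def ballAvg {N : ℕ} (u : Euc N → ℝ) (r : ℝ) (y : Euc N) : ℝ := ∫ w, u (y + w) ∂(ballProb N r)

lemma ballProb_integrable {N : ℕ} {r : ℝ} (hr : 0 < r) {u : Euc N → ℝ} (hu : Integrable u volume)
    (y : Euc N) : Integrable (fun w => u (y + w)) (ballProb N r) := by
  refine Integrable.smul_measure ?_ (ENNReal.inv_ne_top.2 (measure_ball_pos _ _ hr).ne')
  exact (hu.comp_add_left y).integrableOn

lemma ballAvg_measurable {N : ℕ} {r : ℝ} (hr : 0 < r) {u : Euc N → ℝ} (hum : Measurable u) :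
    Measurable (ballAvg u r) := by
  have := ballProb_prob (N := N) hr
  have h : StronglyMeasurable (fun p : Euc N × Euc N => u (p.1 + p.2)) :=
    (hum.comp (measurable_fst.add measurable_snd)).stronglyMeasurable
  exact (h.integral_prod_right' (ν := ballProb N r)).measurable

lemma ballAvg_sub_le {N : ℕ} {r : ℝ} (hr : 0 < r) {u : Euc N → ℝ} (hu : Integrable u volume)
    (y : Euc N) (c : ℝ) :
    ‖ballAvg u r y - c‖ₑ ≤ ∫⁻ w, ‖u (y + w) - c‖ₑ ∂(ballProb N r) := by
  have := ballProb_prob (N := N) hr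
  have h : ballAvg u r y - c = ∫ w, (u (y + w) - c) ∂(ballProb N r) := by
    rw [integral_sub (ballProb_integrable hr hu y) (integrable_const c)]
    simp [ballAvg]
  rw [h]
  exact enorm_integral_le_lintegral_enorm _

lemma lintegral_ballAvg_sub_le {N : ℕ} {r : ℝ} (hr : 0 < r) {u : Euc N → ℝ} (hum : Measurable u)
    (hu : Integrable u volume) (S : Set (Euc N)) {c : ℝ≥0∞}
    (h : ∀ w : Euc N, ‖w‖ < r → ∫⁻ y in S, ‖u (y + w) - u y‖ₑ ≤ c) :
    ∫⁻ y in S, ‖ballAvg u r y - u y‖ₑ ≤ c := by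
  have := ballProb_prob (N := N) hr
  calc ∫⁻ y in S, ‖ballAvg u r y - u y‖ₑ
      ≤ ∫⁻ y in S, ∫⁻ w, ‖u (y + w) - u y‖ₑ ∂(ballProb N r) :=
        lintegral_mono fun y => ballAvg_sub_le hr hu y _
    _ = ∫⁻ w, (∫⁻ y in S, ‖u (y + w) - u y‖ₑ) ∂(ballProb N r) := by
        rw [lintegral_lintegral_swap]
        refine Measurable.aemeasurable ?_
        simp only [Function.uncurry_def]
        exact ((hum.comp (measurable_fst.add measurable_snd)).sub
          (hum.comp measurable_fst)).enorm
    _ ≤ ∫⁻ w, c ∂(ballProb N r) := by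
        refine lintegral_mono_ae ?_
        refine Measure.ae_smul_measure ?_ _
        filter_upwards [ae_restrict_mem measurableSet_ball] with w hw
        exact h w (by simpa using hw)
    _ = c := by simp

/-- Trace convergence of averages over interior balls. -/
lemma ballAvg_tendsto {N : ℕ} {Ω : Set (Euc N)} {u : Euc N → ℝ} (hu : Integrable u volume)
    {x : Euc N} {a : ℝ}
    (hx : Tendsto (fun r : ℝ => ⨍ y in ball x r ∩ Ω, |u y - a| ∂volume) (𝓝[>] (0:ℝ)) (𝓝 0))
    {s : ℕ → ℝ} (hs0 : ∀ n, 0 < s n) (hs : Tendsto s atTop (𝓝 0)) {c C : ℝ} (hc : 0 < c) (hC : 0 < C)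
    {q : ℕ → Euc N} (hq : ∀ᶠ n in atTop, ball (q n) (c * s n) ⊆ ball x (C * s n) ∩ Ω) :
    Tendsto (fun n => ballAvg u (c * s n) (q n)) atTop (𝓝 a) := by
  have hCs : Tendsto (fun n => C * s n) atTop (𝓝[>] (0:ℝ)) := by
    refine tendsto_nhdsWithin_iff.2 ⟨?_, Eventually.of_forall fun n => mul_pos hC (hs0 n)⟩
    simpa using hs.const_mul C
  have h1 := (hx.comp hCs).const_mul ((C / c) ^ N)
  rw [mul_zero] at h1
  rw [tendsto_iff_norm_sub_tendsto_zero]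
  refine squeeze_zero' (Eventually.of_forall fun n => norm_nonneg _) ?_ h1
  filter_upwards [hq] with n hn
  have hr : 0 < c * s n := mul_pos hc (hs0 n)
  have hR : 0 < C * s n := mul_pos hC (hs0 n)
  have := ballProb_prob (N := N) hr
  set D := ball x (C * s n) ∩ Ω with hD
  have hDfin : volume D < ⊤ := (measure_mono inter_subset_left).trans_lt measure_ball_lt_top
  have hi : IntegrableOn (fun y => |u y - a|) D volume := by
    refine Integrable.abs (hu.integrableOn.sub ?_)
    exact integrableOn_const hDfin.ne
  have e1 : ‖ballAvg u (c * s n) (q n) - a‖ ≤ ∫ w, |u (q n + w) - a| ∂(ballProb N (c * s n)) := by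
    have h : ballAvg u (c * s n) (q n) - a = ∫ w, (u (q n + w) - a) ∂(ballProb N (c * s n)) := by
      rw [integral_sub (ballProb_integrable hr hu _) (integrable_const a)]
      simp [ballAvg]
    rw [h]
    exact norm_integral_le_integral_norm _
  have e2 : ∫ w, |u (q n + w) - a| ∂(ballProb N (c * s n)) =
      (volume.real (ball (0 : Euc N) (c * s n)))⁻¹ * ∫ y in ball (q n) (c * s n), |u y - a| := by
    rw [ballProb, integral_smul_measure, smul_eq_mul, ENNReal.toReal_inv]
    congr 1
    rw [← integral_indicator measurableSet_ball, ← integral_indicator measurableSet_ball,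
      ← integral_add_left_eq_self ((ball (q n) (c * s n)).indicator fun y => |u y - a|) (q n)]
    refine integral_congr_ae (Eventually.of_forall fun w => ?_)
    have hm : w ∈ ball (0 : Euc N) (c * s n) ↔ q n + w ∈ ball (q n) (c * s n) := by
      simp [mem_ball, dist_eq_norm]
    by_cases hw : w ∈ ball (0 : Euc N) (c * s n)
    · show indicator _ _ _ = indicator _ _ _
      rw [indicator_of_mem hw, indicator_of_mem (hm.1 hw)]
    · show indicator _ _ _ = indicator _ _ _
      rw [indicator_of_notMem hw, indicator_of_notMem (fun h => hw (hm.2 h))]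
  have e3 : ∫ y in ball (q n) (c * s n), |u y - a| ≤ ∫ y in D, |u y - a| :=
    setIntegral_mono_set hi (Eventually.of_forall fun y => abs_nonneg _)
      (LE.le.eventuallyLE hn)
  have e4 : volume.real D ≤ (C / c) ^ N * volume.real (ball (0 : Euc N) (c * s n)) := by
    have : volume.real D ≤ volume.real (ball x (C * s n)) :=
      measureReal_mono inter_subset_left measure_ball_lt_top.ne
    refine this.trans (le_of_eq ?_)
    rw [measureReal_def, measureReal_def, Measure.addHaar_ball_of_pos _ _ hR,
      Measure.addHaar_ball_of_pos _ _ hr]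
    simp only [finrank_euclideanSpace, Fintype.card_fin, ENNReal.toReal_mul]
    rw [ENNReal.toReal_ofReal (by positivity), ENNReal.toReal_ofReal (by positivity), ← mul_assoc, ← mul_pow]
    congr 2
    field_simp
  have hvb : 0 < volume.real (ball (0 : Euc N) (c * s n)) :=
    ENNReal.toReal_pos (measure_ball_pos _ _ hr).ne' measure_ball_lt_top.ne
  have hvD : 0 < volume.real D := by
    refine ENNReal.toReal_pos ?_ hDfin.ne
    exact ((measure_ball_pos volume (q n) hr).trans_le (measure_mono hn)).ne'
  have hI : 0 ≤ ∫ y in D, |u y - a| := integral_nonneg fun y => abs_nonneg _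
  rw [e2] at e1
  refine e1.trans ?_
  simp only [Function.comp_apply]
  rw [setAverage_eq, smul_eq_mul]
  calc (volume.real (ball (0 : Euc N) (c * s n)))⁻¹ * ∫ y in ball (q n) (c * s n), |u y - a|
      ≤ (volume.real (ball (0 : Euc N) (c * s n)))⁻¹ * ∫ y in D, |u y - a| := by gcongr
    _ ≤ ((C / c) ^ N * (volume.real D)⁻¹) * ∫ y in D, |u y - a| := by
        gcongr
        rw [← div_eq_mul_inv, inv_eq_one_div, div_le_div_iff₀ hvb hvD, one_mul]
        exact e4
    _ = _ := by ring

/-- Layer estimate. -/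
lemma layer_step {N : ℕ} {φ : Euc N → Euc N → ℝ} {Ω : Set (Euc N)} {lam Lam : ℝ}
    (hφ : MetricIntegrand φ Ω lam Lam)
    {u : Euc N → ℝ} (hum : Measurable u) (hu : Integrable u volume)
    {δ : ℝ} {K : Set (Euc N)}
    (hK : ∀ z, Adm φ Ω z → Disjoint (tsupport z) K → ∫ x in Ω, u x * divg z x ≤ δ)
    {e : Euc N} {G : Euc N → ℝ} {M : ℝ≥0} (hG : GChart e G M)
    {W : Set (Euc N)} (hW : IsOpen W) {ε : ℝ}
    (hWK : ∀ y, 0 < G y → G y < 4 * ε → (∃ x ∈ W, dist (gproj e G y) x < ε) → y ∈ Ω \ K)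
    {n : ℕ} (hn : 1 ≤ n) {s : ℝ} (hs : 0 < s) (hsn : n * s = ε) :
    ∫⁻ y in {y | ε < G y ∧ G y < 2 * ε ∧ gproj e G y ∈ W},
      ‖u y - ballAvg u ((1 / (2 * M + 2)) * s) (y - ((⌊G y / s⌋ - 1 : ℝ) * s) • e)‖ₑ
      ≤ n * ENNReal.ofReal (4 * s / lam * δ) := by
  have hlam : 0 < lam := hφ.2.2.2.1
  have hδ : 0 ≤ δ := by
    have := hK (fun _ => 0) ⟨contDiff_const, by simp [HasCompactSupport, tsupport],
      by simp [tsupport, Function.support], fun x => polar_zero_le⟩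
      (by simp [tsupport, Function.support])
    simpa [divg] using this
  set c : ℝ := 1 / (2 * M + 2) with hc
  have hM0 : (0:ℝ) ≤ M := M.2
  have hc0 : 0 < c := by rw [hc]; positivity
  have hcM : M * c ≤ 1 / 2 := by
    rw [hc, mul_one_div, div_le_div_iff₀ (by positivity) (by positivity)]; linarith
  have hcM' : (1 + M) * c ≤ 1 / 2 := by
    rw [hc, mul_one_div, div_le_div_iff₀ (by positivity) (by positivity)]; linarith
  have hsε : s ≤ ε := by
    rw [← hsn]
    have : (1:ℝ) ≤ n := by exact_mod_cast hn
    nlinarith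
  set r := c * s with hr
  have hr0 : 0 < r := mul_pos hc0 hs
  set S : Set (Euc N) := {y | s / 2 < G y ∧ G y < 2 * s ∧ gproj e G y ∈ W} with hSdef
  have hS : IsOpen S := by
    refine (isOpen_lt continuous_const hG.continuous).inter
      ((isOpen_lt hG.continuous continuous_const).inter (hW.preimage hG.gproj_continuous))
  -- translation estimates
  have hB1 : ∀ j ∈ Finset.Ico n (2 * n),
      ∫⁻ y in S, ‖u (y + (((j:ℝ) - 1) * s) • e) - u y‖ₑ ≤ ENNReal.ofReal (2 * s / lam * δ) := by
    intro j hj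
    rw [Finset.mem_Ico] at hj
    have hj1 : (1:ℝ) ≤ j := by exact_mod_cast hn.trans hj.1
    have hj2 : (j:ℝ) + 1 ≤ 2 * n := by exact_mod_cast hj.2
    have hjs : 0 ≤ ((j:ℝ) - 1) * s := mul_nonneg (by linarith) hs.le
    have hjs2 : ((j:ℝ) - 1) * s + 2 * s ≤ 2 * ε := by
      rw [← hsn]; nlinarith
    refine translation_bound hφ hum hu hK hS _ ?_ (by positivity) ?_
    · intro y hy τ hτ
      rw [smul_smul]
      have h1 : 0 ≤ τ * (((j:ℝ) - 1) * s) := mul_nonneg hτ.1 hjs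
      have h2 : τ * (((j:ℝ) - 1) * s) ≤ ((j:ℝ) - 1) * s := mul_le_of_le_one_left hjs hτ.2
      refine hWK _ ?_ ?_ ⟨gproj e G y, hy.2.2, ?_⟩
      · rw [hG.add]; linarith [hy.1]
      · rw [hG.add]; linarith [hy.2.1]
      · rw [hG.gproj_add, dist_self]; linarith
    · intro y
      rw [norm_smul, hG.norm_e, mul_one, Real.norm_eq_abs, abs_of_nonneg hjs]
      rcases hjs.eq_or_lt with h0 | h0
      · rw [← h0]; simp; exact hs.le
      set a := ((j:ℝ) - 1) * s with ha
      have hsub : {τ : ℝ | τ ∈ Ioc (0:ℝ) 1 ∧ y - τ • a • e ∈ S} ⊆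
          Icc ((G y - 2 * s) / a) ((G y - s / 2) / a) := by
        rintro τ ⟨_, h1, h2, _⟩
        have : G (y - τ • a • e) = G y - τ * a := by
          rw [smul_smul, sub_eq_add_neg, ← neg_smul, hG.add]; ring
        rw [this] at h1 h2
        constructor
        · rw [div_le_iff₀ h0]; linarith
        · rw [le_div_iff₀ h0]; linarith
      have h3 : volume.real {τ : ℝ | τ ∈ Ioc (0:ℝ) 1 ∧ y - τ • a • e ∈ S} ≤
          (G y - s / 2) / a - (G y - 2 * s) / a := by
        refine (measureReal_mono hsub (by simp)).trans ?_
        rw [Real.volume_real_Icc_of_le]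
        gcongr; linarith
      calc a * _ ≤ a * ((G y - s / 2) / a - (G y - 2 * s) / a) := by gcongr
        _ = 3 / 2 * s := by field_simp; ring
        _ ≤ 2 * s := by linarith
  have hB2 : ∫⁻ y in S, ‖ballAvg u r y - u y‖ₑ ≤ ENNReal.ofReal (2 * s / lam * δ) := by
    refine lintegral_ballAvg_sub_le hr0 hum hu S fun w hw => ?_
    refine translation_bound hφ hum hu hK hS _ ?_ (by positivity) ?_
    · intro y hy τ hτ
      have hd : dist (y + τ • w) y ≤ r := by
        rw [dist_eq_norm, add_sub_cancel_left, norm_smul, Real.norm_of_nonneg hτ.1]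
        exact (mul_le_of_le_one_left (norm_nonneg _) hτ.2).trans hw.le
      have h1 := abs_le.1 (hG.abs_sub_le (y + τ • w) y)
      have h2 : M * dist (y + τ • w) y ≤ M * r := by gcongr
      have h3 : M * r ≤ s / 2 := by rw [hr]; nlinarith
      have h4 : (1 + M) * dist (y + τ • w) y ≤ (1 + M) * r := by gcongr
      have h5 : (1 + M) * r ≤ s / 2 := by rw [hr]; nlinarith
      refine hWK _ ?_ ?_ ⟨gproj e G y, hy.2.2, ?_⟩
      · linarith [hy.1]
      · linarith [hy.2.1]
      · have := hG.gproj_dist_le (y + τ • w) y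
        linarith
    · intro y
      have h1 : volume.real {τ : ℝ | τ ∈ Ioc (0:ℝ) 1 ∧ y - τ • w ∈ S} ≤ 1 := by
        refine (measureReal_mono (s₂ := Ioc (0:ℝ) 1) (fun τ h => h.1) (by simp)).trans ?_
        simp
      have hc1 : c ≤ 1 := by
        rw [hc, div_le_one (by positivity)]; linarith
      have : r ≤ s := by rw [hr]; nlinarith
      calc ‖w‖ * _ ≤ ‖w‖ * 1 := by gcongr
        _ ≤ 2 * s := by linarith
  -- the pointwise bound
  set k : ℕ → Euc N → ℝ≥0∞ := fun j => S.indicator fun y =>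
    ‖u (y + (((j:ℝ) - 1) * s) • e) - u y‖ₑ + ‖ballAvg u r y - u y‖ₑ with hk
  have hkm : ∀ j, Measurable (k j) := by
    intro j
    refine Measurable.indicator ?_ hS.measurableSet
    exact ((hum.comp (measurable_id.add_const _)).sub hum).enorm.add
      ((ballAvg_measurable hr0 hum).sub hum).enorm
  set T : Set (Euc N) := {y | ε < G y ∧ G y < 2 * ε ∧ gproj e G y ∈ W} with hT
  have hTo : IsOpen T := by
    refine (isOpen_lt continuous_const hG.continuous).inter
      ((isOpen_lt hG.continuous continuous_const).inter (hW.preimage hG.gproj_continuous))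
  have hpt : ∀ y ∈ T, ‖u y - ballAvg u r (y - ((⌊G y / s⌋ - 1 : ℝ) * s) • e)‖ₑ ≤
      ∑ j ∈ Finset.Ico n (2 * n), k j (y - (((j:ℝ) - 1) * s) • e) := by
    rintro y ⟨hy1, hy2, hy3⟩
    have hf1 : (n : ℤ) ≤ ⌊G y / s⌋ := by
      rw [Int.le_floor, le_div_iff₀ hs]; push_cast; linarith
    have hf2 : ⌊G y / s⌋ < (2 * n : ℤ) := by
      rw [Int.floor_lt, div_lt_iff₀ hs]; push_cast; linarith
    obtain ⟨j, hj⟩ : ∃ j : ℕ, ⌊G y / s⌋ = j := ⟨_, (Int.toNat_of_nonneg (by omega)).symm⟩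
    have hjm : j ∈ Finset.Ico n (2 * n) := by rw [Finset.mem_Ico]; omega
    refine le_trans ?_ (Finset.single_le_sum (f := fun j => k j (y - (((j:ℝ) - 1) * s) • e))
      (fun _ _ => zero_le) hjm)
    have hj' : ((⌊G y / s⌋ : ℤ) : ℝ) = (j : ℝ) := by rw [hj]; simp
    rw [hj']
    set q := y - (((j:ℝ) - 1) * s) • e with hq
    have hGq : G q = G y - ((j:ℝ) - 1) * s := by
      rw [hq, sub_eq_add_neg, ← neg_smul, hG.add]; ring
    have hpq : gproj e G q = gproj e G y := by
      rw [hq, sub_eq_add_neg, ← neg_smul, hG.gproj_add]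
    have hl1 : (j:ℝ) ≤ G y / s := by rw [← hj']; exact Int.floor_le _
    have hl2 : G y / s < (j:ℝ) + 1 := by rw [← hj']; exact Int.lt_floor_add_one _
    rw [le_div_iff₀ hs] at hl1
    rw [div_lt_iff₀ hs] at hl2
    have hqS : q ∈ S := by
      refine ⟨?_, ?_, ?_⟩
      · rw [hGq]; linarith
      · rw [hGq]; linarith
      · rw [hpq]; exact hy3
    simp only [hk]
    rw [indicator_of_mem hqS]
    have : q + (((j:ℝ) - 1) * s) • e = y := by rw [hq]; simp
    rw [this]
    have e1 : u y - ballAvg u r q = (u y - u q) - (ballAvg u r q - u q) := by ring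
    rw [e1]
    exact enorm_sub_le
  calc ∫⁻ y in T, ‖u y - ballAvg u r (y - ((⌊G y / s⌋ - 1 : ℝ) * s) • e)‖ₑ
      ≤ ∫⁻ y in T, ∑ j ∈ Finset.Ico n (2 * n), k j (y - (((j:ℝ) - 1) * s) • e) :=
        setLIntegral_mono' hTo.measurableSet hpt
    _ ≤ ∫⁻ y, ∑ j ∈ Finset.Ico n (2 * n), k j (y - (((j:ℝ) - 1) * s) • e) :=
        setLIntegral_le_lintegral _ _
    _ = ∑ j ∈ Finset.Ico n (2 * n), ∫⁻ y, k j (y - (((j:ℝ) - 1) * s) • e) :=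
        lintegral_finsetSum _ fun j _ => (hkm j).comp (measurable_id.sub_const _)
    _ = ∑ j ∈ Finset.Ico n (2 * n), ∫⁻ y, k j y := by
        refine Finset.sum_congr rfl fun j _ => lintegral_sub_right_eq_self (k j) _
    _ ≤ ∑ j ∈ Finset.Ico n (2 * n), ENNReal.ofReal (4 * s / lam * δ) := by
        refine Finset.sum_le_sum fun j hj => ?_
        simp only [hk]
        have hm1 : Measurable fun y => ‖u (y + (((j:ℝ) - 1) * s) • e) - u y‖ₑ :=
          ((hum.comp (measurable_id.add_const _)).sub hum).enorm
        rw [lintegral_indicator hS.measurableSet, lintegral_add_left hm1]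
        refine (add_le_add (hB1 j hj) hB2).trans (le_of_eq ?_)
        rw [← ENNReal.ofReal_add (by positivity) (by positivity)]
        congr 1; ring
    _ = n * ENNReal.ofReal (4 * s / lam * δ) := by
        rw [Finset.sum_const, Nat.card_Ico, nsmul_eq_mul]
        congr 2; omega

lemma layer_bound {N : ℕ} {φ : Euc N → Euc N → ℝ} {Ω : Set (Euc N)} {lam Lam : ℝ}
    (hφ : MetricIntegrand φ Ω lam Lam)
    {u : Euc N → ℝ} (hum : Measurable u) (hu : Integrable u volume)
    {δ : ℝ} {K : Set (Euc N)}
    (hK : ∀ z, Adm φ Ω z → Disjoint (tsupport z) K → ∫ x in Ω, u x * divg z x ≤ δ)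
    {e : Euc N} {G : Euc N → ℝ} {M : ℝ≥0} (hG : GChart e G M)
    {W : Set (Euc N)} (hW : IsOpen W) {ε : ℝ} (hε : 0 < ε)
    (hWK : ∀ y, 0 < G y → G y < 4 * ε → (∃ x ∈ W, dist (gproj e G y) x < ε) → y ∈ Ω \ K)
    {f : Euc N → ℝ}
    (hf : ∀ᵐ y ∂volume.restrict {y | ε < G y ∧ G y < 2 * ε ∧ gproj e G y ∈ W},
      Tendsto (fun r : ℝ => ⨍ z in ball (gproj e G y) r ∩ Ω, |u z - f (gproj e G y)| ∂volume)
      (𝓝[>] (0:ℝ)) (𝓝 0)) :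
    AEMeasurable (fun y => f (gproj e G y))
      (volume.restrict {y | ε < G y ∧ G y < 2 * ε ∧ gproj e G y ∈ W}) ∧
    ∫⁻ y in {y | ε < G y ∧ G y < 2 * ε ∧ gproj e G y ∈ W}, ‖u y - f (gproj e G y)‖ₑ
      ≤ ENNReal.ofReal (4 * ε / lam * δ) := by
  set T : Set (Euc N) := {y | ε < G y ∧ G y < 2 * ε ∧ gproj e G y ∈ W} with hT
  have hTo : IsOpen T := by
    refine (isOpen_lt continuous_const hG.continuous).inter
      ((isOpen_lt hG.continuous continuous_const).inter (hW.preimage hG.gproj_continuous))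
  have hM0 : (0:ℝ) ≤ M := M.2
  set c : ℝ := 1 / (2 * M + 2) with hc
  have hc0 : 0 < c := by rw [hc]; positivity
  have hcM : M * c ≤ 1 / 2 := by
    rw [hc, mul_one_div, div_le_div_iff₀ (by positivity) (by positivity)]; linarith
  have hcM' : (1 + M) * c ≤ 1 / 2 := by
    rw [hc, mul_one_div, div_le_div_iff₀ (by positivity) (by positivity)]; linarith
  set s : ℕ → ℝ := fun n => ε / ((n:ℝ) + 1) with hs
  have hs0 : ∀ n, 0 < s n := fun n => by simp only [hs]; positivity
  have hsle : ∀ n, s n ≤ ε := fun n => div_le_self hε.le (by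
    have : (0:ℝ) ≤ n := n.cast_nonneg
    linarith)
  have hslim : Tendsto s atTop (𝓝 0) := by
    have := (tendsto_one_div_add_atTop_nhds_zero_nat (𝕜 := ℝ)).const_mul ε
    simpa [hs, div_eq_mul_inv] using this
  set B : ℕ → Euc N → ℝ := fun n y =>
    ballAvg u (c * s n) (y - ((⌊G y / s n⌋ - 1 : ℝ) * s n) • e) with hB
  have hBm : ∀ n, Measurable (B n) := by
    intro n
    refine (ballAvg_measurable (mul_pos hc0 (hs0 n)) hum).comp ?_
    have h1 : Measurable fun y => ((⌊G y / s n⌋ : ℤ) : ℝ) :=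
      (measurable_of_countable _).comp (hG.continuous.measurable.div_const _).floor
    exact measurable_id.sub (((h1.sub_const _).mul_const _).smul_const e)
  have hBlim : ∀ᵐ y ∂volume.restrict T, Tendsto (fun n => B n y) atTop (𝓝 (f (gproj e G y))) := by
    filter_upwards [hf, ae_restrict_mem hTo.measurableSet] with y hy hyT
    refine ballAvg_tendsto hu hy hs0 hslim hc0 (by norm_num : (0:ℝ) < 3) ?_
    refine Eventually.of_forall fun n => ?_
    set q := y - ((⌊G y / s n⌋ - 1 : ℝ) * s n) • e with hq
    have hGq : G q = G y - ((⌊G y / s n⌋ - 1 : ℝ)) * s n := by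
      rw [hq, sub_eq_add_neg, ← neg_smul, hG.add]; ring
    have hpq : gproj e G q = gproj e G y := by
      rw [hq, sub_eq_add_neg, ← neg_smul, hG.gproj_add]
    have hl1 : (⌊G y / s n⌋:ℝ) ≤ G y / s n := Int.floor_le _
    have hl2 : G y / s n < (⌊G y / s n⌋:ℝ) + 1 := Int.lt_floor_add_one _
    rw [le_div_iff₀ (hs0 n)] at hl1
    rw [div_lt_iff₀ (hs0 n)] at hl2
    have hq1 : s n ≤ G q := by rw [hGq]; linarith
    have hq2 : G q < 2 * s n := by rw [hGq]; linarith
    intro z hz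
    rw [mem_ball] at hz
    have hsn := hs0 n
    have h1 := abs_le.1 (hG.abs_sub_le z q)
    have h2 : M * dist z q ≤ M * (c * s n) := by gcongr
    have h3 : M * (c * s n) ≤ s n / 2 := by nlinarith
    have h4 := hG.gproj_dist_le z q
    have h5 : (1 + M) * dist z q ≤ (1 + M) * (c * s n) := by gcongr
    have h6 : (1 + M) * (c * s n) ≤ s n / 2 := by nlinarith
    have h7 := hsle n
    constructor
    · rw [mem_ball, ← hpq]
      have h8 : dist q (gproj e G q) = G q := by
        rw [hG.dist_gproj, abs_of_nonneg (by linarith)]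
      have h9 := dist_triangle z q (gproj e G q)
      have hcs : c * s n ≤ s n / 2 := by nlinarith [mul_nonneg hM0 hc0.le]
      linarith
    · refine (hWK z (by linarith) (by linarith) ⟨gproj e G y, hyT.2.2, ?_⟩).1
      rw [← hpq]; linarith
  refine ⟨aemeasurable_of_tendsto_metrizable_ae atTop (fun n => (hBm n).aemeasurable) hBlim, ?_⟩
  calc ∫⁻ y in T, ‖u y - f (gproj e G y)‖ₑ
      = ∫⁻ y in T, liminf (fun n => ‖u y - B n y‖ₑ) atTop := by
        refine lintegral_congr_ae ?_
        filter_upwards [hBlim] with y hy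
        exact (((hy.const_sub (u y)).enorm).liminf_eq).symm
    _ ≤ liminf (fun n => ∫⁻ y in T, ‖u y - B n y‖ₑ) atTop :=
        lintegral_liminf_le fun n => (hum.sub (hBm n)).enorm
    _ ≤ liminf (fun _ : ℕ => ENNReal.ofReal (4 * ε / lam * δ)) atTop := by
        refine liminf_le_liminf (Eventually.of_forall fun n => ?_)
        have h1 : ((n + 1 : ℕ) : ℝ) * s n = ε := by
          simp only [hs]; push_cast; field_simp
        refine (layer_step hφ hum hu hK hG hW hWK (n := n + 1) (by omega) (hs0 n) h1).trans
          (le_of_eq ?_)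
        rw [← ENNReal.ofReal_natCast, ← ENNReal.ofReal_mul (by positivity)]
        congr 1
        rw [← h1]; ring
    _ = ENNReal.ofReal (4 * ε / lam * δ) := by simp

lemma volume_le_of_coord {N : ℕ} (b : OrthonormalBasis (Fin N) ℝ (Euc N)) (V : Set (Euc N))
    (w : Fin N → ℝ) (h : ∀ i, ∀ y ∈ V, ∀ y' ∈ V, |⟪b i, y - y'⟫| ≤ w i) :
    volume V ≤ ∏ i, ENNReal.ofReal (w i) := by
  set g : Euc N → (Fin N → ℝ) := fun y i => ⟪b i, y⟫ with hg
  have hgm : MeasurePreserving g volume volume := by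
    have := (PiLp.volume_preserving_ofLp (Fin N)).comp b.measurePreserving_repr
    have hge : g = WithLp.ofLp ∘ b.repr := by
      funext y i
      simp [hg, b.repr_apply_apply]
    rw [hge]; exact this
  have h1 : volume V ≤ volume (g '' V) := by
    calc volume V ≤ volume (g ⁻¹' (toMeasurable volume (g '' V))) :=
          measure_mono ((subset_preimage_image g V).trans
            (preimage_mono (subset_toMeasurable _ _)))
      _ = volume (g '' V) := by
          rw [hgm.measure_preimage (measurableSet_toMeasurable _ _).nullMeasurableSet,
            measure_toMeasurable]
  refine h1.trans ((Real.volume_pi_le_prod_diam _).trans ?_)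
  refine Finset.prod_le_prod' fun i _ => ?_
  refine Metric.ediam_le_of_forall_dist_le ?_
  rintro _ ⟨_, ⟨y, hy, rfl⟩, rfl⟩ _ ⟨_, ⟨y', hy', rfl⟩, rfl⟩
  rw [Real.dist_eq]
  simp only [hg, Function.eval, ← inner_sub_right]
  exact h i y hy y' hy'

lemma volume_slab_le {N : ℕ} {a e : Euc N} (hae : ⟪a, e⟫ = 1)
    {V : Set (Euc N)} {w0 w : ℝ}
    (h1 : ∀ y ∈ V, ∀ y' ∈ V, |⟪a, y - y'⟫| ≤ w0)
    (h2 : ∀ y ∈ V, ∀ y' ∈ V, ‖(y - y') - ⟪a, y - y'⟫ • e‖ ≤ w) :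
    volume V ≤ ENNReal.ofReal (w0 / ‖a‖) * ENNReal.ofReal w ^ (N - 1) := by
  classical
  have ha0 : a ≠ 0 := by rintro rfl; simp at hae
  have han : 0 < ‖a‖ := norm_pos_iff.2 ha0
  have hN : 0 < N := by
    rcases Nat.eq_zero_or_pos N with rfl | h
    · exact absurd (Subsingleton.elim _ _) ha0
    · exact h
  set n : Euc N := (‖a‖)⁻¹ • a with hn
  have hnn : ‖n‖ = 1 := by rw [hn, norm_smul, norm_inv, norm_norm, inv_mul_cancel₀ han.ne']
  have han' : ⟪a, n⟫ = ‖a‖ := by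
    rw [hn, inner_smul_right, real_inner_self_eq_norm_sq]; field_simp
  have hna : ∀ y, ⟪n, y⟫ = ⟪a, y⟫ / ‖a‖ := by
    intro y; rw [hn, real_inner_smul_left]; field_simp
  obtain ⟨b, hb⟩ := Orthonormal.exists_orthonormalBasis_extension_of_card_eq (𝕜 := ℝ)
    (E := Euc N) (ι := Fin N) (by simp) (v := fun _ => n) (s := {⟨0, hN⟩}) (by
      constructor
      · intro i; exact hnn
      · intro i j hij
        exact absurd (Subsingleton.elim i j) hij)
  have hb0 : b ⟨0, hN⟩ = n := hb _ rfl
  set L := LinearMap.transvection ((innerSL ℝ a : Euc N →L[ℝ] ℝ) : Euc N →ₗ[ℝ] ℝ)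
    ((‖a‖)⁻¹ • n - e) with hL
  have hLa : ∀ y, L y = y + ⟪a, y⟫ • ((‖a‖)⁻¹ • n - e) := fun y => rfl
  have hdet : LinearMap.det L = 1 := by
    rw [hL, LinearMap.transvection.det]
    simp only [ContinuousLinearMap.coe_coe, innerSL_apply_apply, inner_sub_right, inner_smul_right,
      han', hae]
    field_simp; ring
  have hvol : volume V = volume (L '' V) := by
    rw [Measure.addHaar_image_linearMap, hdet]; simp
  rw [hvol]
  refine (volume_le_of_coord b _ (fun i => if i = ⟨0, hN⟩ then w0 / ‖a‖ else w) ?_).trans ?_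
  · rintro i _ ⟨y, hy, rfl⟩ _ ⟨y', hy', rfl⟩
    rw [← map_sub, hLa]
    split_ifs with hi
    · rw [hi, hb0, hna]
      have : ⟪a, y - y' + ⟪a, y - y'⟫ • ((‖a‖)⁻¹ • n - e)⟫ = ⟪a, y - y'⟫ := by
        simp only [inner_add_right, inner_smul_right, inner_sub_right, han', hae,
          inv_mul_cancel₀ han.ne']
        ring
      rw [this, abs_div, abs_of_pos han]
      gcongr
      exact h1 y hy y' hy'
    · have h0 : ⟪b i, n⟫ = 0 := by
        rw [← hb0]; exact b.orthonormal.2 hi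
      have : ⟪b i, y - y' + ⟪a, y - y'⟫ • ((‖a‖)⁻¹ • n - e)⟫ =
          ⟪b i, (y - y') - ⟪a, y - y'⟫ • e⟫ := by
        simp only [inner_add_right, inner_smul_right, inner_sub_right, h0]
        ring
      rw [this]
      refine (abs_real_inner_le_norm _ _).trans ?_
      rw [b.orthonormal.1 i, one_mul]
      exact h2 y hy y' hy'
  · have : ∀ i : Fin N, ENNReal.ofReal (if i = ⟨0, hN⟩ then w0 / ‖a‖ else w) =
        if i = ⟨0, hN⟩ then ENNReal.ofReal (w0 / ‖a‖) else ENNReal.ofReal w := by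
      intro i; split_ifs <;> rfl
    simp_rw [this]
    rw [← Finset.mul_prod_erase Finset.univ _ (Finset.mem_univ (⟨0, hN⟩ : Fin N))]
    simp only [if_true]
    rw [Finset.prod_congr rfl (g := fun _ => ENNReal.ofReal w)]
    · simp
    · intro i hi
      rw [if_neg (Finset.ne_of_mem_erase hi)]

namespace GChart

variable {N : ℕ} {e : Euc N} {G : Euc N → ℝ} {M : ℝ≥0}

lemma gproj_eq_add (y : Euc N) : gproj e G y = y + (-G y) • e := by
  rw [gproj, neg_smul, sub_eq_add_neg]

lemma fderiv_gproj (h : GChart e G M) (y : Euc N) :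
    fderiv ℝ G (gproj e G y) = fderiv ℝ G y := by
  rw [gproj_eq_add, ← fderiv_comp_add_right]
  simp_rw [h.add]
  rw [fderiv_add_const]

lemma differentiableAt_gproj (h : GChart e G M) {y : Euc N} :
    DifferentiableAt ℝ G (gproj e G y) ↔ DifferentiableAt ℝ G y := by
  rw [gproj_eq_add, ← differentiableAt_comp_add_right]
  simp_rw [h.add]
  rw [differentiableAt_add_const_iff]

lemma gradient_gproj (h : GChart e G M) (y : Euc N) :
    gradient G (gproj e G y) = gradient G y := by
  simp only [gradient, h.fderiv_gproj]

lemma inner_gradient (h : GChart e G M) {y : Euc N} (hy : DifferentiableAt ℝ G y) :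
    ⟪gradient G y, e⟫ = 1 := by
  rw [inner_gradient_left]
  have h1 : HasDerivAt (fun t : ℝ => y + t • e) e 0 := by
    have := ((hasDerivAt_id (0:ℝ)).smul_const e).const_add y
    simpa using this
  have h2 : HasFDerivAt G (fderiv ℝ G y) (y + (0:ℝ) • e) := by
    simpa using hy.hasFDerivAt
  have h3 := h2.comp_hasDerivAt (0:ℝ) h1
  have h4 : HasDerivAt (fun t : ℝ => G y + t) 1 0 := (hasDerivAt_id (0:ℝ)).const_add _
  have h5 : (G ∘ fun t : ℝ => y + t • e) = fun t => G y + t := by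
    funext t; simp [h.add]
  rw [h5] at h3
  exact h3.unique h4

lemma one_le_norm (h : GChart e G M) {a : Euc N} (ha : ⟪a, e⟫ = 1) : 1 ≤ ‖a‖ := by
  have := real_inner_le_norm a e
  rwa [ha, h.norm_e, mul_one] at this

lemma norm_gradient_le (h : GChart e G M) (y : Euc N) : ‖gradient G y‖ ≤ M := by
  rw [gradient, LinearIsometryEquiv.norm_map]
  exact norm_fderiv_le_of_lipschitz ℝ h.lip

lemma measurable_gradient (G : Euc N → ℝ) : Measurable (gradient G) :=
  ((InnerProductSpace.toDual ℝ (Euc N)).symm.continuous.measurable).comp (measurable_fderiv ℝ G)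

lemma isOpen_slab (h : GChart e G M) (ε : ℝ) : IsOpen {y | ε < G y ∧ G y < 2 * ε} :=
  (isOpen_lt continuous_const h.continuous).inter (isOpen_lt h.continuous continuous_const)

lemma piece_bound (h : GChart e G M) {ε η r : ℝ} (hε : 0 < ε) (hη : 0 < η) (hr : 0 < r)
    {a : Euc N} (ha : ⟪a, e⟫ = 1) {B : Set (Euc N)} (hB : MeasurableSet B)
    (hB0 : ∀ x ∈ B, G x = 0)
    (hBr : ∀ x ∈ B, ∀ v : Euc N, ‖v‖ ≤ r → |G (x + v) - G x - ⟪a, v⟫| ≤ 2 * η * ‖v‖) :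
    volume ({y | ε < G y ∧ G y < 2 * ε} ∩ gproj e G ⁻¹' B) ≤
      ENNReal.ofReal ((1 + 2 * η) ^ N * ε / ‖a‖) * μH[(N:ℝ) - 1] B := by
  have ha1 := h.one_le_norm ha
  have hN : 0 < N := by
    rcases Nat.eq_zero_or_pos N with rfl | h'
    · rw [Subsingleton.elim a 0, norm_zero] at ha1; linarith
    · exact h'
  set T := {y | ε < G y ∧ G y < 2 * ε} with hT
  have hTo : IsOpen T := h.isOpen_slab ε
  have hpm : Measurable (gproj e G) := h.gproj_continuous.measurable
  set σ : Measure (Euc N) := (volume.restrict T).map (gproj e G) with hσ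
  set c := ENNReal.ofReal ((1 + 2 * η) ^ N * ε / ‖a‖) with hc
  have hc0 : c ≠ 0 := by
    rw [hc, Ne, ENNReal.ofReal_eq_zero, not_le]; positivity
  have hct : c ≠ ⊤ := ENNReal.ofReal_ne_top
  have hσa : ∀ A, MeasurableSet A → σ A = volume (T ∩ gproj e G ⁻¹' A) := by
    intro A hA
    rw [hσ, Measure.map_apply hpm hA, Measure.restrict_apply (hpm hA), inter_comm]
  have key : c⁻¹ • σ.restrict B ≤ μH[(N:ℝ) - 1] := by
    refine Measure.le_hausdorffMeasure _ _ (ENNReal.ofReal (min ε r)) (by simp [hε, hr]) ?_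
    intro s hs
    rw [Measure.smul_apply, smul_eq_mul, mul_comm, ← div_eq_mul_inv]
    refine ENNReal.div_le_of_le_mul' ?_
    have hst : ediam s ≠ ⊤ := ne_top_of_le_ne_top ENNReal.ofReal_ne_top hs
    set d := (ediam s).toReal with hd
    have hd0 : 0 ≤ d := ENNReal.toReal_nonneg
    have hdr : d ≤ min ε r := by
      rw [hd]; exact ENNReal.toReal_le_of_le_ofReal (by positivity) hs
    have hdε : d ≤ ε := hdr.trans (min_le_left _ _)
    have hdr : d ≤ r := hdr.trans (min_le_right _ _)
    have hexp : ediam s ^ ((N:ℝ) - 1) = ENNReal.ofReal d ^ (N - 1) := by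
      rw [hd, ENNReal.ofReal_toReal hst, ← ENNReal.rpow_natCast, Nat.cast_sub hN]
      simp
    rw [hexp]
    have hdist : ∀ x ∈ closure s, ∀ x' ∈ closure s, ‖x - x'‖ ≤ d := by
      intro x hx x' hx'
      rw [← dist_eq_norm, hd, ← ediam_closure]
      exact Metric.dist_le_diam_of_mem' (by rwa [ediam_closure]) hx hx'
    calc (σ.restrict B) s ≤ (σ.restrict B) (closure s) := measure_mono subset_closure
      _ = volume (T ∩ gproj e G ⁻¹' (closure s ∩ B)) := by
          rw [Measure.restrict_apply isClosed_closure.measurableSet,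
            hσa _ (isClosed_closure.measurableSet.inter hB)]
      _ ≤ ENNReal.ofReal ((ε + 2 * η * d) / ‖a‖) * ENNReal.ofReal ((1 + 2 * η) * d) ^ (N - 1) := by
          have hcomp : ∀ y ∈ T ∩ gproj e G ⁻¹' (closure s ∩ B),
              ∀ y' ∈ T ∩ gproj e G ⁻¹' (closure s ∩ B),
              ‖gproj e G y - gproj e G y'‖ ≤ d ∧
              |⟪a, gproj e G y - gproj e G y'⟫| ≤ 2 * η * d ∧
              y - y' = (gproj e G y - gproj e G y') + (G y - G y') • e ∧ |G y - G y'| ≤ ε := by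
            rintro y ⟨hyT, hys, hyB⟩ y' ⟨hyT', hys', hyB'⟩
            have h1 := hdist _ hys _ hys'
            refine ⟨h1, ?_, ?_, ?_⟩
            · have h2 := hBr _ hyB' (gproj e G y - gproj e G y') (h1.trans hdr)
              rw [add_sub_cancel, h.G_gproj, h.G_gproj, sub_zero, zero_sub, abs_neg] at h2
              exact h2.trans (by gcongr)
            · simp only [gproj, sub_smul]; abel
            · rw [abs_le]
              constructor <;> linarith [hyT.1, hyT.2, hyT'.1, hyT'.2]
          refine volume_slab_le ha ?_ ?_
          · intro y hy y' hy'
            obtain ⟨h1, h2, h3, h4⟩ := hcomp y hy y' hy'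
            rw [h3, inner_add_right, inner_smul_right, ha, mul_one]
            exact (abs_add_le _ _).trans (by linarith)
          · intro y hy y' hy'
            obtain ⟨h1, h2, h3, h4⟩ := hcomp y hy y' hy'
            have h5 : y - y' - ⟪a, y - y'⟫ • e = (gproj e G y - gproj e G y') -
                ⟪a, gproj e G y - gproj e G y'⟫ • e := by
              rw [h3, inner_add_right, inner_smul_right, ha, mul_one, add_smul]; abel
            rw [h5]
            refine (norm_sub_le _ _).trans ?_
            rw [norm_smul, h.norm_e, mul_one, Real.norm_eq_abs]
            linarith
      _ ≤ ENNReal.ofReal ((1 + 2 * η) * ε / ‖a‖) *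
          ENNReal.ofReal ((1 + 2 * η) * d) ^ (N - 1) := by
          gcongr
          nlinarith
      _ = c * ENNReal.ofReal d ^ (N - 1) := by
          rw [ENNReal.ofReal_mul (p := 1 + 2 * η) (q := d) (by positivity), mul_pow, ← mul_assoc, hc,
            ← ENNReal.ofReal_pow (by positivity), ← ENNReal.ofReal_mul (by positivity)]
          congr 2
          obtain ⟨k, rfl⟩ : ∃ k, N = k + 1 := ⟨N - 1, by omega⟩
          simp only [Nat.add_sub_cancel]
          ring
  have h1 := key B
  rw [Measure.smul_apply, smul_eq_mul, Measure.restrict_apply_self, mul_comm,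
    ← div_eq_mul_inv] at h1
  rw [← hσa B hB]
  rw [ENNReal.div_le_iff hc0 hct] at h1
  rwa [mul_comm]

end GChart

lemma measure_le_of_cover {X : Type*} [MeasurableSpace X] {lm ν : Measure X} {C : ℝ≥0∞}
    {Q : ℕ → Set X} (hQ : ∀ n, MeasurableSet (Q n)) (h0 : lm (⋃ n, Q n)ᶜ = 0)
    (h : ∀ n B, MeasurableSet B → B ⊆ Q n → lm B ≤ C * ν B) {B : Set X} (hB : MeasurableSet B) :
    lm B ≤ C * ν B := by
  have hd : ∀ n, MeasurableSet (B ∩ disjointed Q n) := fun n =>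
    hB.inter (MeasurableSet.disjointed hQ n)
  have hdd : Pairwise (Function.onFun Disjoint fun n => B ∩ disjointed Q n) := fun i j hij =>
    ((disjoint_disjointed Q) hij).mono inter_subset_right inter_subset_right
  have hU : (⋃ n, B ∩ disjointed Q n) = B ∩ ⋃ n, Q n := by
    rw [← inter_iUnion, iUnion_disjointed]
  calc lm B ≤ lm (B ∩ ⋃ n, Q n) + lm (⋃ n, Q n)ᶜ := by
        refine (measure_mono ?_).trans (measure_union_le _ _)
        intro x hx
        by_cases hx' : x ∈ ⋃ n, Q n
        · exact Or.inl ⟨hx, hx'⟩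
        · exact Or.inr hx'
    _ = ∑' n, lm (B ∩ disjointed Q n) := by
        rw [h0, add_zero, ← hU, measure_iUnion hdd hd]
    _ ≤ ∑' n, C * ν (B ∩ disjointed Q n) :=
        ENNReal.tsum_le_tsum fun n => h n _ (hd n)
          (inter_subset_right.trans (disjointed_subset Q n))
    _ = C * ν (B ∩ ⋃ n, Q n) := by
        rw [ENNReal.tsum_mul_left, ← hU, measure_iUnion hdd hd]
    _ ≤ C * ν B := by gcongr; exact inter_subset_left

/-- The surface measure obtained from layers. -/
def layerMeas {N : ℕ} (e : Euc N) (G : Euc N → ℝ) (ε : ℝ) : Measure (Euc N) :=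
  ((volume.restrict {y | ε < G y ∧ G y < 2 * ε}).withDensity
    fun y => ‖gradient G y‖ₑ).map (gproj e G)

lemma layerMeas_le_aux {N : ℕ} {e : Euc N} {G : Euc N → ℝ} {M : ℝ≥0} (h : GChart e G M) {ε η : ℝ}
    (hε : 0 < ε) (hη : 0 < η) {B : Set (Euc N)} (hB : MeasurableSet B) :
    layerMeas e G ε B ≤ ENNReal.ofReal ((1 + η) * (1 + 2 * η) ^ N * ε) * μH[(N:ℝ) - 1] B := by
  set T := {y | ε < G y ∧ G y < 2 * ε} with hT
  have hTo : IsOpen T := h.isOpen_slab ε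
  have hpm : Measurable (gproj e G) := h.gproj_continuous.measurable
  have hla : ∀ A, MeasurableSet A → layerMeas e G ε A =
      ∫⁻ y in T ∩ gproj e G ⁻¹' A, ‖gradient G y‖ₑ := by
    intro A hA
    rw [layerMeas, Measure.map_apply hpm hA, withDensity_apply _ (hpm hA),
      Measure.restrict_restrict (hpm hA), inter_comm]
  -- dense sequence of gradients
  set D := {x | DifferentiableAt ℝ G x} with hD
  have hDm : MeasurableSet D := measurableSet_of_differentiableAt ℝ G
  have hDae : ∀ᵐ x ∂(volume : Measure (Euc N)), x ∈ D := h.lip.ae_differentiableAt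
  obtain ⟨x0, hx0⟩ : ∃ x, x ∈ D := hDae.exists
  set Γ : Set (Euc N) := gradient G '' D with hΓ
  have : Nonempty Γ := ⟨⟨_, mem_image_of_mem _ hx0⟩⟩
  set aseq : ℕ → Γ := TopologicalSpace.denseSeq Γ with haseq
  have hae : ∀ k, ⟪(aseq k : Euc N), e⟫ = 1 := by
    intro k
    obtain ⟨x, hx, hxe⟩ := (aseq k).2
    rw [← hxe]; exact h.inner_gradient hx
  set Q : ℕ → Set (Euc N) := fun n =>
    ({x | G x = 0} ∩ (D ∩ {x | ‖gradient G x - aseq n.unpair.1‖ ≤ η})) ∩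
      {x | ∀ v : Euc N, ‖v‖ ≤ 1 / ((n.unpair.2 : ℝ) + 1) →
        |G (x + v) - G x - ⟪(aseq n.unpair.1 : Euc N), v⟫| ≤ 2 * η * ‖v‖} with hQ
  have hQm : ∀ n, MeasurableSet (Q n) := by
    intro n
    refine MeasurableSet.inter ((isClosed_eq h.continuous continuous_const).measurableSet.inter
      (hDm.inter ?_)) ?_
    · exact measurableSet_le ((GChart.measurable_gradient G).sub_const _).norm measurable_const
    · refine IsClosed.measurableSet ?_
      simp only [Set.ofPred_forall]
      refine isClosed_iInter fun v => isClosed_iInter fun _ => ?_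
      refine isClosed_le ?_ continuous_const
      have := h.continuous
      fun_prop
  refine measure_le_of_cover hQm ?_ ?_ hB
  · rw [hla _ (MeasurableSet.iUnion hQm).compl]
    refine setLIntegral_measure_zero _ _ ?_
    refine measure_mono_null ?_ (ae_iff.1 hDae)
    rintro y ⟨_, hy⟩ hyD
    apply hy
    have hxD : DifferentiableAt ℝ G (gproj e G y) := h.differentiableAt_gproj.2 hyD
    obtain ⟨k, hk⟩ := (TopologicalSpace.denseRange_denseSeq Γ).exists_dist_lt
      ⟨_, mem_image_of_mem _ hxD⟩ hη
    rw [Subtype.dist_eq, dist_eq_norm] at hk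
    have hlit := (hasFDerivAt_iff_isLittleO_nhds_zero.1 hxD.hasFDerivAt).def hη
    obtain ⟨ρ, hρ, hball⟩ := Metric.eventually_nhds_iff.1 hlit
    obtain ⟨m, hm⟩ := exists_nat_one_div_lt hρ
    refine mem_iUnion.2 ⟨Nat.pair k m, ?_⟩
    simp only [hQ, Nat.unpair_pair]
    refine ⟨⟨h.G_gproj y, hxD, hk.le⟩, fun v hv => ?_⟩
    have h1 := hball (y := v) (by rw [dist_zero_right]; exact hv.trans_lt hm)
    rw [Real.norm_eq_abs, ← inner_gradient_left] at h1
    have h2 : |⟪gradient G (gproj e G y) - aseq k, v⟫| ≤ η * ‖v‖ :=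
      (abs_real_inner_le_norm _ _).trans (by gcongr)
    rw [inner_sub_left] at h2
    have h3 : G (gproj e G y + v) - G (gproj e G y) - ⟪(aseq k : Euc N), v⟫ =
      (G (gproj e G y + v) - G (gproj e G y) - ⟪gradient G (gproj e G y), v⟫) +
      (⟪gradient G (gproj e G y), v⟫ - ⟪(aseq k : Euc N), v⟫) := by ring
    rw [h3]
    refine (abs_add_le _ _).trans ?_
    linarith
  · intro n A hA hAQ
    rw [hla _ hA]
    set a : Euc N := ((aseq n.unpair.1 : Γ) : Euc N) with ha
    have ha1 : 1 ≤ ‖a‖ := h.one_le_norm (hae _)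
    have ha0 : 0 < ‖a‖ := by linarith
    calc ∫⁻ y in T ∩ gproj e G ⁻¹' A, ‖gradient G y‖ₑ
        ≤ ∫⁻ y in T ∩ gproj e G ⁻¹' A, ENNReal.ofReal (‖a‖ + η) := by
          refine setLIntegral_mono' (hTo.measurableSet.inter (hpm hA)) ?_
          rintro y ⟨_, hy⟩
          have h1 := (hAQ hy).1.2.2
          simp only [Set.mem_ofPred_eq, h.gradient_gproj] at h1
          rw [← ofReal_norm]
          refine ENNReal.ofReal_le_ofReal ?_
          have := norm_sub_norm_le (gradient G y) a
          linarith
      _ = ENNReal.ofReal (‖a‖ + η) * volume (T ∩ gproj e G ⁻¹' A) := by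
          rw [setLIntegral_const]
      _ ≤ ENNReal.ofReal (‖a‖ + η) * (ENNReal.ofReal ((1 + 2 * η) ^ N * ε / ‖a‖) *
            μH[(N:ℝ) - 1] A) := by
          gcongr
          exact h.piece_bound hε hη (r := 1 / ((n.unpair.2 : ℝ) + 1)) (by positivity) (hae _) hA
            (fun x hx => (hAQ hx).1.1) (fun x hx => (hAQ hx).2)
      _ ≤ _ := by
          rw [← mul_assoc, ← ENNReal.ofReal_mul (by positivity)]
          refine mul_le_mul_left (ENNReal.ofReal_le_ofReal ?_) _
          rw [mul_div_assoc', div_le_iff₀ ha0]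
          have : ‖a‖ + η ≤ (1 + η) * ‖a‖ := by nlinarith
          calc (‖a‖ + η) * ((1 + 2 * η) ^ N * ε) ≤ ((1 + η) * ‖a‖) * ((1 + 2 * η) ^ N * ε) := by
                gcongr
            _ = _ := by ring

lemma layerMeas_le {N : ℕ} {e : Euc N} {G : Euc N → ℝ} {M : ℝ≥0} (h : GChart e G M) {ε : ℝ}
    (hε : 0 < ε) : layerMeas e G ε ≤ ENNReal.ofReal ε • (μH[(N:ℝ) - 1] : Measure (Euc N)) := by
  refine Measure.le_iff.2 fun B hB => ?_
  rw [Measure.smul_apply, smul_eq_mul]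
  have hlim : Tendsto (fun η : ℝ => ENNReal.ofReal ((1 + η) * (1 + 2 * η) ^ N * ε) *
      μH[(N:ℝ) - 1] B) (𝓝[>] 0) (𝓝 (ENNReal.ofReal ε * μH[(N:ℝ) - 1] B)) := by
    refine ENNReal.Tendsto.mul_const ?_ (Or.inl (by simpa using hε))
    refine (ENNReal.tendsto_ofReal ?_).mono_left nhdsWithin_le_nhds
    have : Continuous fun η : ℝ => (1 + η) * (1 + 2 * η) ^ N * ε := by fun_prop
    simpa using this.tendsto 0
  refine ge_of_tendsto hlim ?_
  filter_upwards [self_mem_nhdsWithin] with η hη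
  exact layerMeas_le_aux h hε hη hB

/-- A local chart of a Lipschitz domain. -/
structure LChart {N : ℕ} (Ω : Set (Euc N)) (e : Euc N) (G : Euc N → ℝ) (M : ℝ≥0)
    (U : Set (Euc N)) : Prop where
  toG : GChart e G M
  isOpen : IsOpen U
  mem_iff : ∀ y ∈ U, (y ∈ Ω ↔ 0 < G y)

lemma exists_lchart {N : ℕ} {Ω : Set (Euc N)} (hΩl : HasLipschitzBoundary Ω) {x : Euc N}
    (hx : x ∈ frontier Ω) : ∃ e G M U, LChart Ω e G M U ∧ x ∈ U := by
  obtain ⟨ν, U, g, L, hν, hU, hxU, hg, hiff⟩ := hΩl x hx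
  refine ⟨ν, fun y => ⟪y, ν⟫ - g (y - ⟪y, ν⟫ • ν), 1 + L * 2, U, ⟨⟨hν, ?_, ?_⟩, hU, ?_⟩, hxU⟩
  · have h1 : LipschitzWith 1 fun y : Euc N => ⟪y, ν⟫ := by
      refine LipschitzWith.of_dist_le_mul fun y y' => ?_
      rw [Real.dist_eq, ← inner_sub_left, dist_eq_norm]
      simpa [hν] using abs_real_inner_le_norm (y - y') ν
    have h2 : LipschitzWith 2 fun y : Euc N => y - ⟪y, ν⟫ • ν := by
      refine LipschitzWith.of_dist_le_mul fun y y' => ?_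
      have e1 : (y - ⟪y, ν⟫ • ν) - (y' - ⟪y', ν⟫ • ν) = (y - y') - ⟪y - y', ν⟫ • ν := by
        rw [inner_sub_left, sub_smul]; abel
      rw [dist_eq_norm, dist_eq_norm, e1]
      refine (norm_sub_le _ _).trans ?_
      rw [norm_smul, hν, mul_one, Real.norm_eq_abs]
      have := abs_real_inner_le_norm (y - y') ν
      rw [hν, mul_one] at this
      simp only [NNReal.coe_ofNat]
      linarith
    exact h1.sub (hg.comp h2)
  · intro y t
    have h1 : ⟪y + t • ν, ν⟫ = ⟪y, ν⟫ + t := by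
      rw [inner_add_left, real_inner_smul_left, real_inner_self_eq_norm_sq, hν]; ring
    have h2 : y + t • ν - (⟪y, ν⟫ + t) • ν = y - ⟪y, ν⟫ • ν := by
      rw [add_smul]; abel
    simp only [h1, h2]; ring
  · intro y hy
    rw [hiff y hy, sub_pos]

namespace LChart

variable {N : ℕ} {Ω U : Set (Euc N)} {e : Euc N} {G : Euc N → ℝ} {M : ℝ≥0}

lemma mem_frontier (h : LChart Ω e G M U) (hΩo : IsOpen Ω) {x : Euc N} (hx : x ∈ U)
    (hG : G x = 0) : x ∈ frontier Ω := by
  rw [hΩo.frontier_eq]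
  refine ⟨?_, fun hxΩ => ?_⟩
  · have hc : Continuous fun t : ℝ => x + t • e := by fun_prop
    have h1 : ∀ᶠ t : ℝ in 𝓝[>] 0, x + t • e ∈ U := by
      refine (hc.tendsto' 0 x (by simp)).mono_left nhdsWithin_le_nhds (h.isOpen.mem_nhds hx)
    refine mem_closure_of_tendsto (f := fun t : ℝ => x + t • e) (b := 𝓝[>] (0:ℝ))
      ((hc.tendsto' 0 x (by simp)).mono_left nhdsWithin_le_nhds) ?_
    filter_upwards [h1, self_mem_nhdsWithin] with t ht ht0
    rw [h.mem_iff _ ht, h.toG.add, hG, zero_add]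
    exact ht0
  · rw [h.mem_iff x hx, hG] at hxΩ
    exact lt_irrefl _ hxΩ

lemma G_eq_zero (h : LChart Ω e G M U) (hΩo : IsOpen Ω) {x : Euc N} (hx : x ∈ U)
    (hf : x ∈ frontier Ω) : G x = 0 := by
  rw [hΩo.frontier_eq] at hf
  have h1 : ¬ 0 < G x := fun h0 => hf.2 ((h.mem_iff x hx).2 h0)
  by_contra h2
  have h3 : G x < 0 := lt_of_le_of_ne (not_lt.1 h1) h2
  have h4 : IsOpen (U ∩ {y | G y < 0}) :=
    h.isOpen.inter (isOpen_lt h.toG.continuous continuous_const)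
  obtain ⟨y, ⟨hyU, hy0⟩, hyΩ⟩ := mem_closure_iff.1 hf.1 _ h4 ⟨hx, h3⟩
  have := (h.mem_iff y hyU).1 hyΩ
  exact lt_asymm this hy0

set_option maxHeartbeats 1000000 in
lemma gradient_eq (h : LChart Ω e G M U) (hΩo : IsOpen Ω) {ν : Euc N → Euc N}
    (hν : IsOuterUnitNormal Ω ν) {x : Euc N} (hx : x ∈ U) (hf : x ∈ frontier Ω)
    (hd : DifferentiableAt ℝ G x) : gradient G x = (-‖gradient G x‖) • ν x := by
  obtain ⟨hν1, hlim⟩ := hν x hf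
  set a := gradient G x with ha
  have ha1 : 1 ≤ ‖a‖ := h.toG.one_le_norm (h.toG.inner_gradient hd)
  have ha0 : 0 < ‖a‖ := by linarith
  by_contra hne
  set n := (‖a‖)⁻¹ • a with hn
  have hnn : ‖n‖ = 1 := by rw [hn, norm_smul, norm_inv, norm_norm, inv_mul_cancel₀ ha0.ne']
  have han : a = ‖a‖ • n := by rw [hn, smul_smul, mul_inv_cancel₀ ha0.ne', one_smul]
  set κ := 1 + ⟪n, ν x⟫ with hκ
  have hκ0 : 0 < κ := by
    have h1 : -1 ≤ ⟪n, ν x⟫ := by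
      have := (abs_le.1 (abs_real_inner_le_norm n (ν x))).1
      rwa [hnn, hν1, mul_one] at this
    rcases h1.lt_or_eq with h2 | h2
    · rw [hκ]; linarith
    · exfalso
      apply hne
      have h3 : n = - ν x := by
        rw [← sub_eq_zero, ← norm_eq_zero, ← sq_eq_zero_iff, sub_neg_eq_add, norm_add_sq_real,
          hnn, hν1, ← h2]
        norm_num
      conv_lhs => rw [han, h3]
      simp
  set w := n + ν x with hw
  have hwn : ⟪n, w⟫ = κ := by
    rw [hw, inner_add_right, real_inner_self_eq_norm_sq, hnn, hκ]; ring
  have hwν : ⟪ν x, w⟫ = κ := by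
    rw [hw, inner_add_right, real_inner_self_eq_norm_sq, hν1, hκ, real_inner_comm]; ring
  set R := ‖w‖ + κ with hR
  have hR0 : 0 < R := by positivity
  set ρ := (κ / 2) / R with hρ
  have hρ0 : 0 < ρ := by positivity
  have hGx := h.G_eq_zero hΩo hx hf
  -- small radius
  have hlit := (hasFDerivAt_iff_isLittleO_nhds_zero.1 hd.hasFDerivAt).def
    (show 0 < κ / (4 * R) by positivity)
  obtain ⟨r1, hr1, hball⟩ := Metric.eventually_nhds_iff.1 hlit
  obtain ⟨r2, hr2, hU2⟩ := Metric.isOpen_iff.1 h.isOpen x hx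
  have hev : ∀ᶠ r : ℝ in 𝓝[>] 0, ENNReal.ofReal (ρ ^ N) ≤
      volume (Ω ∩ ball x r ∩ {y | 0 < ⟪y - x, ν x⟫}) / volume (ball x r) := by
    have hlt : ∀ᶠ r : ℝ in 𝓝[>] 0, r < min r1 r2 :=
      (eventually_lt_nhds (lt_min hr1 hr2)).filter_mono nhdsWithin_le_nhds
    filter_upwards [hlt, self_mem_nhdsWithin] with r hr hr0
    have hr0 : 0 < r := hr0
    rw [ENNReal.le_div_iff_mul_le (Or.inl (measure_ball_pos _ _ hr0).ne')
      (Or.inl measure_ball_lt_top.ne)]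
    have e1 : ENNReal.ofReal (ρ ^ N) * volume (ball x r) =
        volume (ball (x + (r / R) • w) (ρ * r)) := by
      rw [Measure.addHaar_ball_mul_of_pos _ _ hρ0, Measure.addHaar_ball_center _ x]
      simp
    rw [e1]
    refine measure_mono ?_
    intro y hy
    rw [mem_ball, dist_eq_norm] at hy
    set t := r / R with ht
    have ht0 : 0 < t := by positivity
    have hρr : ρ * r = t * (κ / 2) := by rw [hρ, ht]; ring
    have htR : t * R = r := by rw [ht]; field_simp
    rw [hρr] at hy
    set q := y - (x + t • w) with hq
    have hyx : y - x = t • w + q := by rw [hq]; abel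
    have hnq : |⟪n, q⟫| ≤ t * (κ / 2) := by
      have := abs_real_inner_le_norm n q
      rw [hnn, one_mul] at this; linarith
    have hνq : |⟪ν x, q⟫| < t * (κ / 2) := by
      have := abs_real_inner_le_norm (ν x) q
      rw [hν1, one_mul] at this; linarith
    have hnorm : ‖y - x‖ < r := by
      rw [hyx]
      refine (norm_add_le _ _).trans_lt ?_
      rw [norm_smul, Real.norm_of_nonneg ht0.le]
      calc t * ‖w‖ + ‖q‖ < t * ‖w‖ + t * (κ / 2) := by linarith
        _ ≤ t * R := by rw [hR]; nlinarith
        _ = r := htR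
    have hyU : y ∈ U := hU2 (by
      rw [mem_ball, dist_eq_norm]; exact hnorm.trans (hr.trans_le (min_le_right _ _)))
    refine ⟨⟨?_, ?_⟩, ?_⟩
    · rw [h.mem_iff y hyU]
      have h1 := hball (y := y - x) (by
        rw [dist_zero_right]; exact hnorm.trans (hr.trans_le (min_le_left _ _)))
      rw [Real.norm_eq_abs, ← inner_gradient_left, add_sub_cancel, hGx, ← ha, sub_zero] at h1
      have h2 : ⟪a, y - x⟫ = ‖a‖ * ⟪n, y - x⟫ := by
        conv_lhs => rw [han, real_inner_smul_left]
      have h3 : t * (κ / 2) ≤ ⟪n, y - x⟫ := by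
        rw [hyx, inner_add_right, inner_smul_right, hwn]
        have := (abs_le.1 hnq).1
        linarith
      have h4 : t * (κ / 2) ≤ ⟪a, y - x⟫ := by
        rw [h2]
        have : 0 ≤ ⟪n, y - x⟫ := le_trans (by positivity) h3
        nlinarith
      have h5 : κ / (4 * R) * ‖y - x‖ < t * (κ / 2) := by
        calc κ / (4 * R) * ‖y - x‖ ≤ κ / (4 * R) * r := by gcongr
          _ = t * (κ / 4) := by rw [← htR]; field_simp
          _ < _ := by nlinarith [mul_pos ht0 hκ0]
      have := (abs_le.1 h1).1
      linarith
    · rw [mem_ball, dist_eq_norm]; exact hnorm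
    · show 0 < ⟪y - x, ν x⟫
      rw [real_inner_comm, hyx, inner_add_right, inner_smul_right, hwν]
      have := (abs_lt.1 hνq).1
      nlinarith [mul_pos ht0 hκ0]
  have := ge_of_tendsto hlim hev
  rw [nonpos_iff_eq_zero, ENNReal.ofReal_eq_zero] at this
  exact absurd (pow_pos hρ0 N) (not_lt.2 this)

end LChart

/-- The trace is measurable along the graph. -/
lemma LChart.aemeasurable_trace {N : ℕ} {Ω U : Set (Euc N)} {e : Euc N} {G : Euc N → ℝ} {M : ℝ≥0}
    (h : LChart Ω e G M U) {u f : Euc N → ℝ} (hum : Measurable u) (hu : Integrable u volume)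
    {m : Measure (Euc N)} (hm : ∀ᵐ x ∂m, x ∈ U ∧ G x = 0 ∧
      Tendsto (fun r : ℝ => ⨍ z in ball x r ∩ Ω, |u z - f x| ∂volume) (𝓝[>] (0:ℝ)) (𝓝 0)) :
    AEMeasurable f m := by
  have hG := h.toG
  have hM0 : (0:ℝ) ≤ M := M.2
  set c : ℝ := 1 / (2 * M + 2) with hc
  have hc0 : 0 < c := by rw [hc]; positivity
  have hcM : M * c ≤ 1 / 2 := by
    rw [hc, mul_one_div, div_le_div_iff₀ (by positivity) (by positivity)]; linarith
  have hc1 : c ≤ 1 / 2 := by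
    rw [hc, div_le_div_iff₀ (by positivity) (by positivity)]; linarith
  set s : ℕ → ℝ := fun n => 1 / ((n:ℝ) + 1) with hs
  have hs0 : ∀ n, 0 < s n := fun n => by simp only [hs]; positivity
  have hslim : Tendsto s atTop (𝓝 0) := tendsto_one_div_add_atTop_nhds_zero_nat (𝕜 := ℝ)
  refine aemeasurable_of_tendsto_metrizable_ae atTop
    (f := fun n x => ballAvg u (c * s n) (x + s n • e)) (fun n => ?_) ?_
  · exact ((ballAvg_measurable (mul_pos hc0 (hs0 n)) hum).comp
      (measurable_id.add_const _)).aemeasurable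
  · filter_upwards [hm] with x ⟨hxU, hx0, hx⟩
    refine ballAvg_tendsto hu hx hs0 hslim hc0 (by norm_num : (0:ℝ) < 2) ?_
    obtain ⟨r, hr, hrU⟩ := Metric.isOpen_iff.1 h.isOpen x hxU
    have hev : ∀ᶠ n in atTop, s n < r / 2 := hslim.eventually (eventually_lt_nhds (by linarith))
    filter_upwards [hev] with n hn
    intro z hz
    rw [mem_ball] at hz
    have hsn := hs0 n
    have hd : dist (x + s n • e) x = s n := by
      rw [dist_eq_norm, add_sub_cancel_left, norm_smul, hG.norm_e, mul_one,
        Real.norm_of_nonneg hsn.le]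
    have h1 := dist_triangle z (x + s n • e) x
    have h2 : c * s n ≤ s n / 2 := by nlinarith
    have hzx : dist z x < 2 * s n := by linarith
    refine ⟨by rwa [mem_ball], ?_⟩
    rw [h.mem_iff z (hrU (by rw [mem_ball]; linarith))]
    have h3 := abs_le.1 (hG.abs_sub_le z (x + s n • e))
    rw [hG.add, hx0, zero_add] at h3
    have h4 : M * dist z (x + s n • e) ≤ M * (c * s n) := by gcongr
    have h5 : M * (c * s n) ≤ s n / 2 := by nlinarith
    linarith

lemma GChart.layer_lintegral_le {N : ℕ} {e : Euc N} {G : Euc N → ℝ} {M : ℝ≥0} (h : GChart e G M)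
    {ε : ℝ} (hε : 0 < ε) {Z : Set (Euc N)} (hZ : MeasurableSet Z) {F : Euc N → ℝ≥0∞}
    (hF : AEMeasurable F ((layerMeas e G ε).restrict Z)) :
    ∫⁻ y in {y | ε < G y ∧ G y < 2 * ε} ∩ gproj e G ⁻¹' Z, ‖gradient G y‖ₑ * F (gproj e G y) ≤
      ENNReal.ofReal ε * ∫⁻ x in Z, F x ∂(μH[(N:ℝ) - 1] : Measure (Euc N)) := by
  have hpm : Measurable (gproj e G) := h.gproj_continuous.measurable
  have hS : MeasurableSet {y | ε < G y ∧ G y < 2 * ε} := (h.isOpen_slab ε).measurableSet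
  have hd : Measurable fun y => ‖gradient G y‖ₑ := (measurable_gradient G).enorm
  have e1 : (layerMeas e G ε).restrict Z =
      ((volume.restrict ({y | ε < G y ∧ G y < 2 * ε} ∩ gproj e G ⁻¹' Z)).withDensity
        fun y => ‖gradient G y‖ₑ).map (gproj e G) := by
    rw [layerMeas, Measure.restrict_map hpm hZ, restrict_withDensity (hpm hZ),
      Measure.restrict_restrict (hpm hZ), inter_comm]
  have h2 : ∫⁻ x in Z, F x ∂(layerMeas e G ε) ≤
      ENNReal.ofReal ε * ∫⁻ x in Z, F x ∂(μH[(N:ℝ) - 1] : Measure (Euc N)) := by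
    rw [← smul_eq_mul, ← lintegral_smul_measure, ← Measure.restrict_smul]
    exact lintegral_mono' (Measure.restrict_mono le_rfl (layerMeas_le h hε)) le_rfl
  refine le_trans (le_of_eq ?_) h2
  rw [e1] at hF ⊢
  rw [lintegral_map' hF hpm.aemeasurable]
  exact (lintegral_withDensity_eq_lintegral_mul₀' hd.aemeasurable (hF.comp_measurable hpm)).symm

lemma GChart.ae_slab {N : ℕ} {e : Euc N} {G : Euc N → ℝ} {M : ℝ≥0} (h : GChart e G M)
    {ε : ℝ} (hε : 0 < ε) {P : Euc N → Prop} (hP : ∀ᵐ x ∂(μH[(N:ℝ) - 1] : Measure (Euc N)), P x) :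
    ∀ᵐ y ∂volume.restrict {y | ε < G y ∧ G y < 2 * ε}, P (gproj e G y) := by
  have hpm : Measurable (gproj e G) := h.gproj_continuous.measurable
  have hd : Measurable fun y => ‖gradient G y‖ₑ := (measurable_gradient G).enorm
  have h1 : ∀ᵐ x ∂(layerMeas e G ε), P x := by
    have h2 : ∀ᵐ x ∂(ENNReal.ofReal ε • (μH[(N:ℝ) - 1] : Measure (Euc N))), P x :=
      Measure.ae_smul_measure hP _
    exact ae_mono (layerMeas_le h hε) h2
  have h3 := ae_of_ae_map hpm.aemeasurable h1
  rw [ae_withDensity_iff hd] at h3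
  have h4 : ∀ᵐ y ∂volume.restrict {y | ε < G y ∧ G y < 2 * ε}, DifferentiableAt ℝ G y :=
    ae_restrict_of_ae h.lip.ae_differentiableAt
  filter_upwards [h3, h4] with y hy hyd
  apply hy
  have := h.one_le_norm (h.inner_gradient hyd)
  rw [enorm_ne_zero, ← norm_ne_zero_iff]
  linarith

lemma GChart.ae_layerMeas {N : ℕ} {e : Euc N} {G : Euc N → ℝ} {M : ℝ≥0} (h : GChart e G M)
    (ε : ℝ) : ∀ᵐ x ∂(layerMeas e G ε), DifferentiableAt ℝ G x := by
  have hpm : Measurable (gproj e G) := h.gproj_continuous.measurable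
  rw [layerMeas, ae_map_iff hpm.aemeasurable (measurableSet_of_differentiableAt ℝ G)]
  have h4 : ∀ᵐ y ∂volume.restrict {y | ε < G y ∧ G y < 2 * ε}, DifferentiableAt ℝ G y :=
    ae_restrict_of_ae h.lip.ae_differentiableAt
  refine (withDensity_absolutelyContinuous _ _).ae_le ?_
  filter_upwards [h4] with y hy
  exact h.differentiableAt_gproj.2 hy

set_option maxHeartbeats 1000000 in
lemma LChart.local_bound {N : ℕ} {φ : Euc N → Euc N → ℝ} {Ω U : Set (Euc N)} {lam Lam : ℝ}
    (hφ : MetricIntegrand φ Ω lam Lam) (hΩo : IsOpen Ω)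
    {u f : Euc N → ℝ} {ν : Euc N → Euc N} (hum : Measurable u) (hu : Integrable u volume)
    {δ : ℝ} {K : Set (Euc N)}
    (hK : ∀ z, Adm φ Ω z → Disjoint (tsupport z) K → ∫ x in Ω, u x * divg z x ≤ δ)
    {e : Euc N} {G : Euc N → ℝ} {M : ℝ≥0} (h : LChart Ω e G M U)
    {ψ : Euc N → ℝ} {C : ℝ≥0} (hψ : LipschitzWith C ψ) (h01 : ∀ x, 0 ≤ ψ x ∧ ψ x ≤ 1)
    {ε : ℝ} (hε : 0 < ε) (hψU : ∀ y, ψ y ≠ 0 → ball y (7 * ε) ⊆ U)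
    (hKt : thickening (4 * ε) K ⊆ Ω) {η : ℝ} (hη : 0 ≤ η)
    (hcomp : ∀ y ∈ closure Ω, ∀ p ∈ closure Ω, dist y p < 2 * ε → ∀ ξ,
      φ y ξ ≤ (1 + η) * φ p ξ)
    (htr : IsTrace Ω u f) (hν : IsOuterUnitNormal Ω ν) :
    ∫⁻ y in {y | ε < G y ∧ G y < 2 * ε}, ENNReal.ofReal (|u y| * (ψ y * ε⁻¹ * φ y (gradient G y)))
      ≤ ENNReal.ofReal (2 * C * Lam * M) *
          (∫⁻ y in Ω ∩ thickening (2 * ε) (frontier Ω), ‖u y‖ₑ)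
        + ENNReal.ofReal (4 * Lam * M / lam * δ)
        + ENNReal.ofReal (1 + η) * ∫⁻ x in frontier Ω, ENNReal.ofReal (ψ x) *
            ENNReal.ofReal (φ x (ν x) * |f x|) ∂(μH[(N:ℝ) - 1] : Measure (Euc N)) := by
  obtain ⟨hφc, hφconv, hφhom, hlam, hLam, hφb⟩ := id hφ
  have hG := h.toG
  set S : Set (Euc N) := {y | ε < G y ∧ G y < 2 * ε} with hS
  have hSo : IsOpen S := hG.isOpen_slab ε
  have hpm : Measurable (gproj e G) := hG.gproj_continuous.measurable
  set W : Set (Euc N) := thickening (2 * ε) (Function.support ψ) with hW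
  have hWo : IsOpen W := isOpen_thickening
  have hWU : ∀ x ∈ W, ball x (5 * ε) ⊆ U := by
    intro x hx z hz
    obtain ⟨y, hy, hxy⟩ := mem_thickening_iff.1 hx
    refine hψU y hy ?_
    rw [mem_ball] at hz ⊢
    have := dist_triangle z x y
    linarith
  have hWU' : W ⊆ U := fun x hx => hWU x hx (mem_ball_self (by linarith))
  set Z : Set (Euc N) := W ∩ {x | G x = 0} with hZ
  have hZm : MeasurableSet Z :=
    hWo.measurableSet.inter (isClosed_eq hG.continuous continuous_const).measurableSet
  have hZf : Z ⊆ frontier Ω := fun x hx => h.mem_frontier hΩo (hWU' hx.1) hx.2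
  have hfc : frontier Ω ⊆ closure Ω := frontier_subset_closure
  set T : Set (Euc N) := {y | ε < G y ∧ G y < 2 * ε ∧ gproj e G y ∈ W} with hT
  have hTS : T = S ∩ gproj e G ⁻¹' Z := by
    ext y
    simp only [hT, hS, hZ, mem_inter_iff, mem_preimage, Set.mem_ofPred_eq, hG.G_gproj, and_true,
      and_assoc]
  have hTm : MeasurableSet T := by rw [hTS]; exact hSo.measurableSet.inter (hpm hZm)
  have hTsub : T ⊆ S := fun y hy => ⟨hy.1, hy.2.1⟩
  have hTd : ∀ y ∈ T, dist y (gproj e G y) < 2 * ε := by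
    intro y hy
    rw [hG.dist_gproj, abs_of_pos (by linarith [hy.1])]
    exact hy.2.1
  have hTp : ∀ y ∈ T, gproj e G y ∈ frontier Ω ∧ gproj e G y ∈ U := fun y hy =>
    ⟨h.mem_frontier hΩo (hWU' hy.2.2) (hG.G_gproj y), hWU' hy.2.2⟩
  have hTΩ : ∀ y ∈ T, y ∈ Ω := by
    intro y hy
    have hyU : y ∈ U := hWU _ hy.2.2 (by rw [mem_ball]; linarith [hTd y hy])
    rw [h.mem_iff y hyU]; linarith [hy.1]
  have hWK : ∀ y, 0 < G y → G y < 4 * ε → (∃ x ∈ W, dist (gproj e G y) x < ε) → y ∈ Ω \ K := by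
    rintro y hy0 hy4 ⟨x, hx, hxd⟩
    have hd : dist y (gproj e G y) < 4 * ε := by rw [hG.dist_gproj, abs_of_pos hy0]; exact hy4
    have hpU : gproj e G y ∈ U := hWU x hx (by rw [mem_ball]; linarith)
    have hpf := h.mem_frontier hΩo hpU (hG.G_gproj y)
    refine ⟨?_, fun hyK => ?_⟩
    · rw [h.mem_iff y (hWU x hx ?_)]; · exact hy0
      rw [mem_ball]
      have := dist_triangle y (gproj e G y) x
      linarith
    · rw [hΩo.frontier_eq] at hpf
      refine hpf.2 (hKt ?_)
      rw [mem_thickening_iff]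
      exact ⟨y, hyK, by rw [dist_comm]; exact hd⟩
  -- trace
  have htr' : ∀ᵐ x ∂(μH[(N:ℝ) - 1] : Measure (Euc N)), x ∈ frontier Ω →
      Tendsto (fun r : ℝ => ⨍ z in ball x r ∩ Ω, |u z - f x| ∂volume) (𝓝[>] (0:ℝ)) (𝓝 0) :=
    (ae_restrict_iff' isClosed_frontier.measurableSet).1 htr
  have hfT : ∀ᵐ y ∂volume.restrict T,
      Tendsto (fun r : ℝ => ⨍ z in ball (gproj e G y) r ∩ Ω, |u z - f (gproj e G y)| ∂volume)
      (𝓝[>] (0:ℝ)) (𝓝 0) := by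
    have h1 := ae_mono (Measure.restrict_mono hTsub le_rfl) (hG.ae_slab hε htr')
    filter_upwards [h1, ae_restrict_mem hTm] with y hy hyT
    exact hy (hTp y hyT).1
  obtain ⟨hfm, hlay⟩ := layer_bound hφ hum hu hK hG hWo hε hWK hfT
  have hdiff : ∀ᵐ y ∂volume.restrict T, DifferentiableAt ℝ G y :=
    ae_restrict_of_ae hG.lip.ae_differentiableAt
  set F : Euc N → ℝ≥0∞ := fun x => ENNReal.ofReal (ψ x) * ENNReal.ofReal (φ x (ν x) * |f x|) with hF
  -- measurability of F
  have hFm : AEMeasurable F ((layerMeas e G ε).restrict Z) := by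
    have hae : ∀ᵐ x ∂(layerMeas e G ε).restrict Z, DifferentiableAt ℝ G x :=
      ae_restrict_of_ae (hG.ae_layerMeas ε)
    have htl : ∀ᵐ x ∂(layerMeas e G ε), x ∈ frontier Ω →
        Tendsto (fun r : ℝ => ⨍ z in ball x r ∩ Ω, |u z - f x| ∂volume) (𝓝[>] (0:ℝ)) (𝓝 0) := by
      have h2 := Measure.ae_smul_measure htr' (ENNReal.ofReal ε)
      exact ae_mono (layerMeas_le hG hε) h2
    have hf' : AEMeasurable f ((layerMeas e G ε).restrict Z) := by
      refine h.aemeasurable_trace hum hu ?_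
      filter_upwards [ae_restrict_mem hZm, ae_restrict_of_ae htl] with x hx hx2
      exact ⟨hWU' hx.1, hx.2, hx2 (hZf hx)⟩
    have hφm : AEMeasurable (fun x => φ x (‖gradient G x‖⁻¹ • gradient G x))
        ((layerMeas e G ε).restrict Z) := by
      have hcl : MeasurableSet (closure Ω ×ˢ (univ : Set (Euc N))) :=
        isClosed_closure.measurableSet.prod MeasurableSet.univ
      have h1 : Measurable ((closure Ω ×ˢ (univ : Set (Euc N))).indicator
          fun p : Euc N × Euc N => φ p.1 p.2) := by
        classical
        rw [← Set.piecewise_eq_indicator]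
        exact hφc.measurable_piecewise (g := 0) continuousOn_const hcl
      have h2 : Measurable fun x : Euc N => (x, ‖gradient G x‖⁻¹ • gradient G x) :=
        measurable_id.prodMk
          ((GChart.measurable_gradient G).norm.inv.smul (GChart.measurable_gradient G))
      refine (h1.comp h2).aemeasurable.congr ?_
      filter_upwards [ae_restrict_mem hZm] with x hx
      simp only [Function.comp]
      rw [Set.indicator_of_mem]
      exact ⟨hfc (hZf hx), mem_univ _⟩
    have h3 : AEMeasurable (fun x => ENNReal.ofReal (ψ x) *
        ENNReal.ofReal (φ x (‖gradient G x‖⁻¹ • gradient G x) * |f x|))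
        ((layerMeas e G ε).restrict Z) :=
      hψ.continuous.measurable.ennreal_ofReal.aemeasurable.mul
        (hφm.mul (continuous_abs.measurable.comp_aemeasurable hf')).ennreal_ofReal
    refine h3.congr ?_
    filter_upwards [ae_restrict_mem hZm, hae] with x hx hxd
    have hg := h.gradient_eq hΩo hν (hWU' hx.1) (hZf hx) hxd
    have h1 := hG.one_le_norm (hG.inner_gradient hxd)
    have : ‖gradient G x‖⁻¹ • gradient G x = - ν x := by
      conv_lhs => rw [hg]
      rw [smul_smul, norm_smul, norm_neg, norm_norm, (hν x (hZf hx)).1, mul_one, mul_neg,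
        inv_mul_cancel₀ (by linarith), neg_one_smul]
    simp only [hF]
    rw [this, hφ.neg (hfc (hZf hx))]
  have hmain : ∫⁻ y in T, ‖gradient G y‖ₑ * F (gproj e G y) ≤ ENNReal.ofReal ε *
      ∫⁻ x in frontier Ω, F x ∂(μH[(N:ℝ) - 1] : Measure (Euc N)) := by
    rw [hTS]
    refine (hG.layer_lintegral_le hε hZm hFm).trans ?_
    gcongr
  -- pointwise
  have hpt : ∀ᵐ y ∂volume.restrict T,
      ENNReal.ofReal (|u y| * (ψ y * ε⁻¹ * φ y (gradient G y))) ≤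
      ENNReal.ofReal (2 * C * Lam * M) * ‖u y‖ₑ +
        (ENNReal.ofReal (ε⁻¹ * (Lam * M)) * ‖u y - f (gproj e G y)‖ₑ +
        ENNReal.ofReal ((1 + η) * ε⁻¹) * (‖gradient G y‖ₑ * F (gproj e G y))) := by
    filter_upwards [hdiff, ae_restrict_mem hTm] with y hyd hyT
    set p := gproj e G y with hp
    have hpc := hfc (hTp y hyT).1
    have hyc : y ∈ closure Ω := subset_closure (hTΩ y hyT)
    have hg : gradient G y = (-‖gradient G y‖) • ν p := by
      have := h.gradient_eq hΩo hν (hTp y hyT).2 (hTp y hyT).1 (hG.differentiableAt_gproj.2 hyd)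
      rwa [hG.gradient_gproj] at this
    set g := ‖gradient G y‖ with hgdef
    have hg0 : 0 ≤ g := norm_nonneg _
    set Φ := φ y (gradient G y) with hΦ
    have hΦ0 : 0 ≤ Φ := hφ.nonneg hyc _
    have hΦ1 : Φ ≤ Lam * M := ((hφb y hyc _).2).trans (by
      have := hG.norm_gradient_le y
      gcongr)
    have hΦ2 : Φ ≤ (1 + η) * (g * φ p (ν p)) := by
      refine (hcomp y hyc p hpc (hTd y hyT) _).trans (le_of_eq ?_)
      rw [hg, hφhom p hpc, abs_neg, abs_of_nonneg hg0]
    have hP0 : 0 ≤ φ p (ν p) := hφ.nonneg hpc _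
    have hψ1 : ψ y ≤ ψ p + C * (2 * ε) := by
      have h1 := hψ.dist_le_mul y p
      rw [Real.dist_eq] at h1
      have h2 := (abs_le.1 h1).2
      have h3 : (C:ℝ) * dist y p ≤ C * (2 * ε) := by
        have := (hTd y hyT).le
        gcongr
      linarith
    have hψp := h01 p
    have hu' : |u y| ≤ |u y - f p| + |f p| := by
      have := abs_add_le (u y - f p) (f p)
      simpa using this
    have hreal : |u y| * (ψ y * ε⁻¹ * Φ) ≤ 2 * C * Lam * M * |u y| +
        (ε⁻¹ * (Lam * M) * |u y - f p| + (1 + η) * ε⁻¹ * (g * (ψ p * (φ p (ν p) * |f p|)))) := by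
      have hLM : 0 ≤ Lam * (M:ℝ) := hΦ0.trans hΦ1
      have hC0 : (0:ℝ) ≤ C := C.2
      have hei : 0 < ε⁻¹ := inv_pos.2 hε
      calc |u y| * (ψ y * ε⁻¹ * Φ) ≤ |u y| * ((ψ p + C * (2 * ε)) * ε⁻¹ * Φ) := by gcongr
        _ = 2 * C * Φ * |u y| + ψ p * ε⁻¹ * Φ * |u y|  := by field_simp; ring
        _ ≤ 2 * C * (Lam * M) * |u y| + ψ p * ε⁻¹ * Φ * (|u y - f p| + |f p|) := by
          have := hψp.1
          gcongr
        _ = 2 * C * (Lam * M) * |u y| + (ψ p * ε⁻¹ * Φ * |u y - f p| +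
            ψ p * ε⁻¹ * Φ * |f p|) := by ring
        _ ≤ 2 * C * (Lam * M) * |u y| + (1 * ε⁻¹ * (Lam * M) * |u y - f p| +
            ψ p * ε⁻¹ * ((1 + η) * (g * φ p (ν p))) * |f p|) := by
          have := hψp.1
          have := hψp.2
          gcongr
        _ = _ := by ring
    have hLM : 0 ≤ 2 * C * Lam * (M:ℝ) := by positivity
    refine (ENNReal.ofReal_le_ofReal hreal).trans ?_
    have e1 : ‖u y‖ₑ = ENNReal.ofReal |u y| := by rw [← ofReal_norm, Real.norm_eq_abs]
    have e2 : ‖u y - f p‖ₑ = ENNReal.ofReal |u y - f p| := by rw [← ofReal_norm, Real.norm_eq_abs]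
    have e3 : ‖gradient G y‖ₑ = ENNReal.ofReal g := by rw [← ofReal_norm]
    refine ENNReal.ofReal_add_le.trans ?_
    refine add_le_add ?_ (ENNReal.ofReal_add_le.trans (add_le_add ?_ ?_))
    · rw [e1, ENNReal.ofReal_mul hLM]
    · rw [e2, ENNReal.ofReal_mul (by positivity)]
    · simp only [hF]
      rw [e3, ← ENNReal.ofReal_mul hψp.1, ← ENNReal.ofReal_mul hg0, ← ENNReal.ofReal_mul (by positivity)]
  have hred : ∫⁻ y in S, ENNReal.ofReal (|u y| * (ψ y * ε⁻¹ * φ y (gradient G y))) ≤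
      ∫⁻ y in T, ENNReal.ofReal (|u y| * (ψ y * ε⁻¹ * φ y (gradient G y))) := by
    have h1 : ∫⁻ y in S, ENNReal.ofReal (|u y| * (ψ y * ε⁻¹ * φ y (gradient G y))) =
      ∫⁻ y in S, T.indicator
        (fun y => ENNReal.ofReal (|u y| * (ψ y * ε⁻¹ * φ y (gradient G y)))) y := by
      refine setLIntegral_congr_fun hSo.measurableSet fun y hy => ?_
      by_cases hyT : y ∈ T
      · simp only [Set.indicator_of_mem hyT]
      · simp only [Set.indicator_of_notMem hyT]
        have : ψ y = 0 := by
          by_contra hne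
          refine hyT ⟨hy.1, hy.2, mem_thickening_iff.2 ⟨y, hne, ?_⟩⟩
          rw [dist_comm, hG.dist_gproj, abs_of_pos (by linarith [hy.1])]
          exact hy.2
        simp [this]
    rw [h1, lintegral_indicator hTm]
    exact lintegral_mono' (Measure.restrict_mono le_rfl Measure.restrict_le_self) le_rfl
  refine hred.trans ((lintegral_mono_ae hpt).trans ?_)
  have hdm : AEMeasurable (fun y => ENNReal.ofReal (ε⁻¹ * (Lam * M)) *
      ‖u y - f (gproj e G y)‖ₑ) (volume.restrict T) :=
    (hum.aemeasurable.sub hfm).enorm.const_mul _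
  rw [lintegral_add_left (hum.enorm.const_mul _),
    lintegral_add_left' hdm,
    lintegral_const_mul' _ _ ENNReal.ofReal_ne_top, lintegral_const_mul' _ _ ENNReal.ofReal_ne_top,
    lintegral_const_mul' _ _ ENNReal.ofReal_ne_top, ← add_assoc]
  have hLam' := hLam.le
  refine add_le_add (add_le_add ?_ ?_) ?_
  · gcongr
    intro y hy
    exact ⟨hTΩ y hy, mem_thickening_iff.2 ⟨_, (hTp y hy).1, hTd y hy⟩⟩
  · refine (mul_le_mul_right hlay _).trans (le_of_eq ?_)
    rw [← ENNReal.ofReal_mul (by positivity)]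
    congr 1
    field_simp
  · refine (mul_le_mul_right hmain _).trans (le_of_eq ?_)
    rw [← mul_assoc, ← ENNReal.ofReal_mul (by positivity)]
    congr 2
    field_simp

lemma MetricIntegrand.zero {N : ℕ} {φ : Euc N → Euc N → ℝ} {Ω : Set (Euc N)} {lam Lam : ℝ}
    (hφ : MetricIntegrand φ Ω lam Lam) {x : Euc N} (hx : x ∈ closure Ω) : φ x 0 = 0 := by
  have := hφ.2.2.1 x hx 0 0
  simpa using this

lemma MetricIntegrand.add_le {N : ℕ} {φ : Euc N → Euc N → ℝ} {Ω : Set (Euc N)} {lam Lam : ℝ}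
    (hφ : MetricIntegrand φ Ω lam Lam) {x : Euc N} (hx : x ∈ closure Ω) (a b : Euc N) :
    φ x (a + b) ≤ φ x a + φ x b := by
  have h1 := (hφ.2.1 x hx).2 (mem_univ a) (mem_univ b) (by norm_num : (0:ℝ) ≤ 1 / 2)
    (by norm_num : (0:ℝ) ≤ 1 / 2) (by norm_num)
  rw [← smul_add, hφ.2.2.1 x hx, abs_of_pos (by norm_num)] at h1
  simp only [smul_eq_mul] at h1
  linarith

lemma MetricIntegrand.sum_le {N : ℕ} {φ : Euc N → Euc N → ℝ} {Ω : Set (Euc N)} {lam Lam : ℝ}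
    (hφ : MetricIntegrand φ Ω lam Lam) {x : Euc N} (hx : x ∈ closure Ω) {ι : Type*} (s : Finset ι)
    (a : ι → Euc N) : φ x (∑ i ∈ s, a i) ≤ ∑ i ∈ s, φ x (a i) := by
  classical
  induction s using Finset.induction_on with
  | empty => simp [hφ.zero hx]
  | insert i s hi ih =>
    rw [Finset.sum_insert hi, Finset.sum_insert hi]
    exact (hφ.add_le hx _ _).trans (by gcongr)

lemma MetricIntegrand.exists_comp {N : ℕ} {φ : Euc N → Euc N → ℝ} {Ω : Set (Euc N)} {lam Lam : ℝ}
    (hφ : MetricIntegrand φ Ω lam Lam) (hΩb : Bornology.IsBounded Ω) {η : ℝ} (hη : 0 < η) :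
    ∃ τ > 0, ∀ y ∈ closure Ω, ∀ p ∈ closure Ω, dist y p < τ → ∀ ξ,
      φ y ξ ≤ (1 + η) * φ p ξ := by
  obtain ⟨hφc, hφconv, hφhom, hlam, hLam, hφb⟩ := id hφ
  have hcomp : IsCompact (closure Ω ×ˢ sphere (0 : Euc N) 1) :=
    hΩb.isCompact_closure.prod (isCompact_sphere _ _)
  have huc := hcomp.uniformContinuousOn_of_continuous
    (hφc.mono (prod_mono le_rfl (subset_univ _)))
  rw [Metric.uniformContinuousOn_iff] at huc
  obtain ⟨τ, hτ, h⟩ := huc (η * lam) (by positivity)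
  refine ⟨τ, hτ, fun y hy p hp hd ξ => ?_⟩
  have hone : ∀ ξ : Euc N, ‖ξ‖ = 1 → φ y ξ ≤ (1 + η) * φ p ξ := by
    intro ξ hξ
    have hs : ξ ∈ sphere (0 : Euc N) 1 := by simpa using hξ
    have h1 := h (y, ξ) ⟨hy, hs⟩ (p, ξ) ⟨hp, hs⟩ (by
      rw [Prod.dist_eq]; simp [hd, hτ])
    rw [Real.dist_eq] at h1
    have h2 := (abs_lt.1 h1).2
    have h3 := (hφb p hp ξ).1
    rw [hξ, mul_one] at h3
    have : η * lam ≤ η * φ p ξ := by gcongr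
    linarith
  rcases eq_or_ne ξ 0 with rfl | hξ
  · rw [hφ.zero hy, hφ.zero hp]; simp
  · have hn : 0 < ‖ξ‖ := norm_pos_iff.2 hξ
    have h1 := hone (‖ξ‖⁻¹ • ξ) (by rw [norm_smul, norm_inv, norm_norm, inv_mul_cancel₀ hn.ne'])
    have e1 : ξ = ‖ξ‖ • (‖ξ‖⁻¹ • ξ) := by rw [smul_smul, mul_inv_cancel₀ hn.ne', one_smul]
    rw [e1, hφhom y hy, hφhom p hp, abs_norm]
    calc ‖ξ‖ * φ y (‖ξ‖⁻¹ • ξ) ≤ ‖ξ‖ * ((1 + η) * φ p (‖ξ‖⁻¹ • ξ)) := by gcongr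
      _ = _ := by ring

/-- The clamp profile. -/
def prof (ε : ℝ) (t : ℝ) : ℝ := max 0 (min 1 (2 - ε⁻¹ * t))

lemma prof_mem (ε t : ℝ) : 0 ≤ prof ε t ∧ prof ε t ≤ 1 :=
  ⟨le_max_left _ _, max_le zero_le_one (min_le_left _ _)⟩

lemma prof_one {ε t : ℝ} (hε : 0 < ε) (ht : t ≤ ε) : prof ε t = 1 := by
  have : ε⁻¹ * t ≤ 1 := by rw [inv_mul_le_iff₀ hε]; linarith
  rw [prof, min_eq_left (by linarith)]; simp

lemma prof_zero {ε t : ℝ} (hε : 0 < ε) (ht : 2 * ε ≤ t) : prof ε t = 0 := by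
  have : 2 ≤ ε⁻¹ * t := by rw [le_inv_mul_iff₀ hε]; linarith
  rw [prof, max_eq_left]
  exact (min_le_right _ _).trans (by linarith)

lemma prof_mid {ε t : ℝ} (hε : 0 < ε) (h1 : ε < t) (h2 : t < 2 * ε) : prof ε t = 2 - ε⁻¹ * t := by
  have a1 : 1 < ε⁻¹ * t := by rw [lt_inv_mul_iff₀ hε]; linarith
  have a2 : ε⁻¹ * t < 2 := by rw [inv_mul_lt_iff₀ hε]; linarith
  rw [prof, min_eq_right (by linarith), max_eq_right (by linarith)]

lemma prof_lip {ε : ℝ} (hε : 0 < ε) : LipschitzWith (Real.toNNReal ε⁻¹) (prof ε) := by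
  refine LipschitzWith.of_dist_le_mul fun s t => ?_
  rw [Real.coe_toNNReal _ (inv_pos.2 hε).le, Real.dist_eq, Real.dist_eq]
  have h1 : |prof ε s - prof ε t| ≤ |min 1 (2 - ε⁻¹ * s) - min 1 (2 - ε⁻¹ * t)| := by
    rw [prof, prof]
    have := abs_max_sub_max_le_max 0 (min 1 (2 - ε⁻¹ * s)) 0 (min 1 (2 - ε⁻¹ * t))
    simpa using this
  have h2 : |min 1 (2 - ε⁻¹ * s) - min 1 (2 - ε⁻¹ * t)| ≤ |(2 - ε⁻¹ * s) - (2 - ε⁻¹ * t)| := by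
    have := abs_min_sub_min_le_max 1 (2 - ε⁻¹ * s) 1 (2 - ε⁻¹ * t)
    simpa using this
  refine h1.trans (h2.trans (le_of_eq ?_))
  rw [show (2 - ε⁻¹ * s) - (2 - ε⁻¹ * t) = -(ε⁻¹ * (s - t)) by ring, abs_neg, abs_mul,
    abs_of_pos (inv_pos.2 hε)]

open Classical in
lemma GChart.gradient_prof {N : ℕ} {e : Euc N} {G : Euc N → ℝ} {M : ℝ≥0} (h : GChart e G M)
    {ε : ℝ} (hε : 0 < ε) {y : Euc N} (hd : DifferentiableAt ℝ G y) :
    gradient (fun x => prof ε (G x)) y =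
      if ε < G y ∧ G y < 2 * ε then (-ε⁻¹) • gradient G y else 0 := by
  split_ifs with hy
  · have h1 : (fun x => prof ε (G x)) =ᶠ[𝓝 y] fun x => 2 - ε⁻¹ * G x := by
      filter_upwards [(h.isOpen_slab ε).mem_nhds hy] with x hx
      exact prof_mid hε hx.1 hx.2
    rw [gradient, gradient, h1.fderiv_eq, fderiv_const_sub, fderiv_const_mul hd, ← neg_smul, map_smul]
  · have : fderiv ℝ (fun x => prof ε (G x)) y = 0 := by
      rw [not_and_or, not_lt, not_lt] at hy
      rcases hy with hy | hy
      · refine IsLocalMax.fderiv_eq_zero (Eventually.of_forall fun x => ?_)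
        simp only [prof_one hε hy]
        exact (prof_mem _ _).2
      · refine IsLocalMin.fderiv_eq_zero (Eventually.of_forall fun x => ?_)
        simp only [prof_zero hε hy]
        exact (prof_mem _ _).1
    rw [gradient, this, map_zero]

lemma gradient_sum_mul {N : ℕ} {ι : Type*} (s : Finset ι) {a b : ι → Euc N → ℝ} {y : Euc N}
    (ha : ∀ i ∈ s, DifferentiableAt ℝ (a i) y) (hb : ∀ i ∈ s, DifferentiableAt ℝ (b i) y) :
    gradient (fun x => ∑ i ∈ s, a i x * b i x) y =
      ∑ i ∈ s, (b i y • gradient (a i) y + a i y • gradient (b i) y) := by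
  rw [gradient, fderiv_fun_sum fun i hi => (ha i hi).fun_mul (hb i hi), map_sum]
  refine Finset.sum_congr rfl fun i hi => ?_
  rw [fderiv_fun_mul (ha i hi) (hb i hi), map_add, map_smul, map_smul, gradient, gradient, add_comm]

lemma sum_setLIntegral_le {α ι : Type*} [MeasurableSpace α] (μ : Measure α) (s : Finset ι)
    (F : ι → α → ℝ≥0∞) : ∑ i ∈ s, ∫⁻ x, F i x ∂μ ≤ ∫⁻ x, ∑ i ∈ s, F i x ∂μ := by
  classical
  induction s using Finset.induction_on with
  | empty => simp
  | insert i s hi ih =>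
    simp_rw [Finset.sum_insert hi]
    exact (add_le_add le_rfl ih).trans (le_lintegral_add _ _)

lemma exists_charts {N : ℕ} {Ω : Set (Euc N)} (hΩb : Bornology.IsBounded Ω)
    (hΩl : HasLipschitzBoundary Ω) : ∃ (ι : Type) (_ : Fintype ι) (e : ι → Euc N)
      (G : ι → Euc N → ℝ) (M : ℝ≥0) (U : ι → Set (Euc N)) (ψ : ι → Euc N → ℝ) (C : ℝ≥0) (ρ : ℝ),
      0 < ρ ∧ (∀ i, LChart Ω (e i) (G i) M (U i)) ∧ (∀ i, LipschitzWith C (ψ i)) ∧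
      (∀ i, Differentiable ℝ (ψ i)) ∧ (∀ i x, 0 ≤ ψ i x) ∧ (∀ x, ∑ i, ψ i x ≤ 1) ∧
      (∀ x, ∀ q ∈ frontier Ω, dist x q < ρ → ∑ i, ψ i x = 1) ∧
      (∀ i, ∀ y ∈ tsupport (ψ i), ball y ρ ⊆ U i) := by
  classical
  have hfc : IsCompact (frontier Ω) := hΩb.isCompact_closure.of_isClosed_subset isClosed_frontier
    frontier_subset_closure
  have hch : ∀ x : frontier Ω, ∃ e G M U, LChart Ω e G M U ∧ (x : Euc N) ∈ U ∧ IsBounded U := by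
    intro x
    obtain ⟨e, G, M, U, h, hx⟩ := exists_lchart hΩl x.2
    refine ⟨e, G, M, U ∩ ball x 1, ⟨h.toG, h.isOpen.inter isOpen_ball,
      fun y hy => h.mem_iff y hy.1⟩, ⟨hx, mem_ball_self one_pos⟩,
      isBounded_ball.subset inter_subset_right⟩
  choose e G M U hL hxU hUb using hch
  obtain ⟨t, ht⟩ := hfc.elim_finite_subcover U (fun x => (hL x).isOpen)
    (fun x hx => mem_iUnion.2 ⟨⟨x, hx⟩, hxU ⟨x, hx⟩⟩)
  have hopen : IsOpen (⋃ i ∈ t, U i) := isOpen_biUnion fun i _ => (hL i).isOpen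
  obtain ⟨ρ0, hρ0, hρt⟩ := hfc.exists_cthickening_subset_open hopen ht
  obtain ⟨p, hp⟩ := SmoothPartitionOfUnity.exists_isSubordinate (modelWithCornersSelf ℝ (Euc N))
    (s := cthickening ρ0 (frontier Ω)) isClosed_cthickening
    (fun i : t => U i) (fun i => (hL i).isOpen) (by
      intro x hx
      obtain ⟨i, hi, hxi⟩ := mem_iUnion₂.1 (hρt hx)
      exact mem_iUnion.2 ⟨⟨i, hi⟩, hxi⟩)
  have hcs : ∀ i : t, IsCompact (tsupport (p i)) := fun i =>
    Metric.isCompact_of_isClosed_isBounded (isClosed_tsupport _) ((hUb i).subset (hp i))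
  have hcd : ∀ i : t, ContDiff ℝ 1 (p i) := fun i =>
    ((p i).contMDiff.contDiff).of_le (by exact_mod_cast le_top)
  have hlip : ∀ i : t, ∃ C, LipschitzWith C (p i) := fun i =>
    (hcd i).lipschitzWith_of_hasCompactSupport (hcs i) one_ne_zero
  choose Cc hCc using hlip
  have hth : ∀ i : t, ∃ ρ > 0, thickening ρ (tsupport (p i)) ⊆ U i := fun i =>
    (hcs i).exists_thickening_subset_open (hL i).isOpen (hp i)
  choose r hr hrU using hth
  have hρ : ∃ ρ > 0, ρ ≤ ρ0 ∧ ∀ i, ρ ≤ r i := by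
    refine ⟨min ρ0 (if h : (Finset.univ : Finset t).Nonempty then Finset.univ.inf' h r else 1), ?_,
      min_le_left _ _, fun i => ?_⟩
    · refine lt_min hρ0 ?_
      split_ifs with h
      · rw [Finset.lt_inf'_iff]; exact fun i _ => hr i
      · exact one_pos
    · refine (min_le_right _ _).trans ?_
      rw [dif_pos ⟨i, Finset.mem_univ i⟩]
      exact Finset.inf'_le _ (Finset.mem_univ i)
  obtain ⟨ρ, hρ, hρ1, hρ2⟩ := hρ
  have hsum : ∀ x, ∑ᶠ i, p i x = ∑ i, p i x := fun x => finsum_eq_sum_of_fintype _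
  refine ⟨t, inferInstance, fun i => e i, fun i => G i, Finset.univ.sup fun i : t => M i,
    fun i => U i, fun i => p i, Finset.univ.sup Cc, ρ, hρ, fun i => ?_, fun i => ?_, fun i => ?_,
    fun i x => p.nonneg i x, fun x => ?_, fun x q hq hxq => ?_, fun i y hy => ?_⟩
  · have h := hL i
    have hM : M i ≤ Finset.univ.sup fun i : t => M i :=
      Finset.le_sup (f := fun i : t => M i) (Finset.mem_univ i)
    exact ⟨⟨h.toG.norm_e, h.toG.lip.weaken hM, h.toG.add⟩, h.isOpen, h.mem_iff⟩
  · exact (hCc i).weaken (Finset.le_sup (f := Cc) (Finset.mem_univ i))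
  · exact (hcd i).differentiable one_ne_zero
  · rw [← hsum]; exact p.sum_le_one x
  · rw [← hsum]
    refine p.sum_eq_one ?_
    refine thickening_subset_cthickening _ _ (mem_thickening_iff.2 ⟨q, hq, hxq.trans_le hρ1⟩)
  · intro z hz
    refine hrU i (mem_thickening_iff.2 ⟨y, hy, ?_⟩)
    exact (mem_ball.1 hz).trans_le (hρ2 i)

lemma MetricIntegrand.aemeasurable {N : ℕ} {φ : Euc N → Euc N → ℝ} {Ω : Set (Euc N)} {lam Lam : ℝ}
    (hφ : MetricIntegrand φ Ω lam Lam) {m : Measure (Euc N)} (hm : ∀ᵐ x ∂m, x ∈ closure Ω)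
    {g : Euc N → Euc N} (hg : Measurable g) : AEMeasurable (fun x => φ x (g x)) m := by
  classical
  have hcl : MeasurableSet (closure Ω ×ˢ (univ : Set (Euc N))) :=
    isClosed_closure.measurableSet.prod MeasurableSet.univ
  have h1 : Measurable ((closure Ω ×ˢ (univ : Set (Euc N))).indicator
      fun p : Euc N × Euc N => φ p.1 p.2) := by
    rw [← Set.piecewise_eq_indicator]
    exact hφ.1.measurable_piecewise (g := 0) continuousOn_const hcl
  refine (h1.comp (measurable_id.prodMk hg)).aemeasurable.congr ?_
  filter_upwards [hm] with x hx
  simp only [Function.comp]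
  rw [Set.indicator_of_mem]
  · rfl
  · exact ⟨hx, mem_univ _⟩

lemma lipschitz_sum_mul {N : ℕ} {ι : Type*} [Fintype ι] {a b : ι → Euc N → ℝ} {A B : ℝ≥0}
    (ha : ∀ i, LipschitzWith A (a i)) (hb : ∀ i, LipschitzWith B (b i))
    (ha1 : ∀ i x, 0 ≤ a i x ∧ a i x ≤ 1) (hb1 : ∀ i x, 0 ≤ b i x ∧ b i x ≤ 1) :
    LipschitzWith (Fintype.card ι * (A + B)) fun x => ∑ i, a i x * b i x := by
  refine LipschitzWith.of_dist_le_mul fun x y => ?_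
  rw [Real.dist_eq, ← Finset.sum_sub_distrib]
  refine (Finset.abs_sum_le_sum_abs _ _).trans ?_
  have h : ∀ i ∈ Finset.univ, |a i x * b i x - a i y * b i y| ≤ (A + B) * dist x y := by
    intro i _
    have h1 := (ha i).dist_le_mul x y
    have h2 := (hb i).dist_le_mul x y
    rw [Real.dist_eq] at h1 h2
    have e1 : a i x * b i x - a i y * b i y = (a i x - a i y) * b i x + a i y * (b i x - b i y) := by
      ring
    rw [e1]
    refine (abs_add_le _ _).trans ?_
    rw [abs_mul, abs_mul, abs_of_nonneg (hb1 i x).1, abs_of_nonneg (ha1 i y).1]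
    have h3 : |a i x - a i y| * b i x ≤ |a i x - a i y| * 1 := by
      have := (hb1 i x).2
      gcongr
    have h4 : a i y * |b i x - b i y| ≤ 1 * |b i x - b i y| := by
      have := (ha1 i y).2
      gcongr
    linarith
  refine (Finset.sum_le_sum h).trans (le_of_eq ?_)
  rw [Finset.sum_const, Finset.card_univ, nsmul_eq_mul]
  push_cast; ring

set_option maxHeartbeats 1000000 in
lemma eps_bound {N : ℕ} {φ : Euc N → Euc N → ℝ} {Ω : Set (Euc N)} {lam Lam : ℝ}
    (hφ : MetricIntegrand φ Ω lam Lam) (hΩo : IsOpen Ω) (hΩb : Bornology.IsBounded Ω)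
    {u f : Euc N → ℝ} {ν : Euc N → Euc N} (hum : Measurable u) (hu : Integrable u volume)
    (hlg : IsPhiLeastGradient φ Ω u) (htr : IsTrace Ω u f) (hν : IsOuterUnitNormal Ω ν)
    {δ : ℝ} (hδ : 0 ≤ δ) {K : Set (Euc N)}
    (hK : ∀ z, Adm φ Ω z → Disjoint (tsupport z) K → ∫ x in Ω, u x * divg z x ≤ δ)
    {ι : Type} [Fintype ι] {e : ι → Euc N} {G : ι → Euc N → ℝ} {M : ℝ≥0} {U : ι → Set (Euc N)}
    {ψ : ι → Euc N → ℝ} {C : ℝ≥0} {ρ : ℝ}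
    (hρ : 0 < ρ) (hL : ∀ i, LChart Ω (e i) (G i) M (U i)) (hψl : ∀ i, LipschitzWith C (ψ i))
    (hψd : ∀ i, Differentiable ℝ (ψ i)) (hψ0 : ∀ i x, 0 ≤ ψ i x) (hψ1 : ∀ x, ∑ i, ψ i x ≤ 1)
    (hψf : ∀ x, ∀ q ∈ frontier Ω, dist x q < ρ → ∑ i, ψ i x = 1)
    (hψU : ∀ i, ∀ y ∈ tsupport (ψ i), ball y ρ ⊆ U i)
    {ε : ℝ} (hε : 0 < ε) (hερ : 7 * ε ≤ ρ) (hKt : thickening (4 * ε) K ⊆ Ω) {η : ℝ} (hη : 0 ≤ η)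
    (hcomp : ∀ y ∈ closure Ω, ∀ p ∈ closure Ω, dist y p < 2 * ε → ∀ ξ,
      φ y ξ ≤ (1 + η) * φ p ξ) :
    phiTV φ Ω u ≤ ENNReal.ofReal δ + (∑ _i : ι, (ENNReal.ofReal (Lam * C) *
          (∫⁻ y in Ω ∩ thickening (2 * ε) (frontier Ω), ‖u y‖ₑ) +
        (ENNReal.ofReal (2 * C * Lam * M) *
          (∫⁻ y in Ω ∩ thickening (2 * ε) (frontier Ω), ‖u y‖ₑ)
        + ENNReal.ofReal (4 * Lam * M / lam * δ))))
        + ENNReal.ofReal (1 + η) * ∫⁻ x in frontier Ω,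
            ENNReal.ofReal (φ x (ν x) * |f x|) ∂(μH[(N:ℝ) - 1] : Measure (Euc N)) := by
  classical
  obtain ⟨hφc, hφconv, hφhom, hlam, hLam, hφb⟩ := id hφ
  have hψ01 : ∀ i x, 0 ≤ ψ i x ∧ ψ i x ≤ 1 := fun i x => ⟨hψ0 i x,
    (Finset.single_le_sum (f := fun i => ψ i x) (fun j _ => hψ0 j x) (Finset.mem_univ i)).trans
      (hψ1 x)⟩
  set hh : ι → Euc N → ℝ := fun i x => prof ε (G i x) with hhdef
  have hh01 : ∀ i x, 0 ≤ hh i x ∧ hh i x ≤ 1 := fun i x => prof_mem _ _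
  have hhl : ∀ i, LipschitzWith (Real.toNNReal ε⁻¹ * M) (hh i) := fun i =>
    (prof_lip hε).comp (hL i).toG.lip
  set χ : Euc N → ℝ := fun x => ∑ i, ψ i x * hh i x with hχdef
  have hχl := lipschitz_sum_mul hψl hhl hψ01 hh01
  have hts : ∀ i y, ψ i y ≠ 0 → y ∈ tsupport (ψ i) := fun i y h => subset_closure h
  set D : Set (Euc N) := Ω ∩ thickening (2 * ε) (frontier Ω) with hD
  have hDo : IsOpen D := hΩo.inter isOpen_thickening
  -- key geometric fact
  have hgeo : ∀ i, ∀ y ∈ tsupport (ψ i), y ∈ Ω → G i y < 2 * ε →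
      ∃ p ∈ frontier Ω, dist y p < 2 * ε := by
    intro i y hy hyΩ hGy
    have hb := hψU i y hy
    have hyU : y ∈ U i := hb (mem_ball_self hρ)
    have h0 := ((hL i).mem_iff y hyU).1 hyΩ
    have hd : dist y (gproj (e i) (G i) y) < 2 * ε := by
      rw [(hL i).toG.dist_gproj, abs_of_pos h0]; exact hGy
    refine ⟨gproj (e i) (G i) y, (hL i).mem_frontier hΩo (hb ?_) ((hL i).toG.G_gproj y), hd⟩
    rw [mem_ball, dist_comm]; linarith
  set κ : ℝ := min (2 * ε) (ε / (M + 1)) with hκdef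
  have hM0 : (0:ℝ) ≤ M := M.2
  have hκ : 0 < κ := lt_min (by linarith) (by positivity)
  have hκ2 : κ ≤ 2 * ε := min_le_left _ _
  have hκM : M * κ ≤ ε := by
    have h1 : κ ≤ ε / (M + 1) := min_le_right _ _
    rw [le_div_iff₀ (by positivity)] at h1
    nlinarith
  have hcut := cutoff_bound hφ hΩo hΩb hu.integrableOn hlg hδ hK (χ := χ) hχl
    (fun x => ⟨Finset.sum_nonneg fun i _ => mul_nonneg (hψ0 i x) (hh01 i x).1,
      (Finset.sum_le_sum fun i _ => mul_le_of_le_one_right (hψ0 i x) (hh01 i x).2).trans (hψ1 x)⟩)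
    hκ
    (by
      intro y hy q hq hyq
      have hyρ : dist y q < ρ := by linarith
      rw [← hψf y q hq hyρ]
      refine Finset.sum_congr rfl fun i _ => ?_
      by_cases h0 : ψ i y = 0
      · simp [h0]
      · have hqU : q ∈ U i := hψU i y (hts i y h0) (by rw [mem_ball, dist_comm]; exact hyρ)
        have hGq := (hL i).G_eq_zero hΩo hqU hq
        have h1 := (abs_le.1 ((hL i).toG.abs_sub_le y q)).2
        have h2 : M * dist y q ≤ M * κ := by gcongr
        have : hh i y = 1 := prof_one hε (by linarith)
        rw [this, mul_one])
    (by
      intro y hy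
      obtain ⟨k, hk, hyk⟩ := mem_thickening_iff.1 hy
      have hyΩ : y ∈ Ω := hKt (mem_thickening_iff.2 ⟨k, hk, by linarith⟩)
      refine Finset.sum_eq_zero fun i _ => ?_
      by_cases h0 : ψ i y = 0
      · simp [h0]
      · have : hh i y = 0 := by
          refine prof_zero hε ?_
          by_contra hlt
          obtain ⟨p, hp, hyp⟩ := hgeo i y (hts i y h0) hyΩ (not_le.1 hlt)
          rw [hΩo.frontier_eq] at hp
          refine hp.2 (hKt (mem_thickening_iff.2 ⟨k, hk, ?_⟩))
          have := dist_triangle p y k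
          rw [dist_comm p y] at this
          linarith
        rw [this, mul_zero])
  refine hcut.trans ?_
  rw [add_assoc]
  refine add_le_add le_rfl ?_
  set S : ι → Set (Euc N) := fun i => {y | ε < G i y ∧ G i y < 2 * ε} with hS
  have hSm : ∀ i, MeasurableSet (S i) := fun i => ((hL i).toG.isOpen_slab ε).measurableSet
  set P : ι → Euc N → ℝ≥0∞ := fun i y =>
    ENNReal.ofReal (|u y| * (ψ i y * ε⁻¹ * φ y (gradient (G i) y))) with hP
  have hPm : ∀ i, AEMeasurable (P i) (volume.restrict Ω) := by
    intro i
    have h1 : AEMeasurable (fun y => φ y (gradient (G i) y)) (volume.restrict Ω) := by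
      refine hφ.aemeasurable ?_ (GChart.measurable_gradient _)
      filter_upwards [ae_restrict_mem hΩo.measurableSet] with x hx
      exact subset_closure hx
    exact ((continuous_abs.measurable.comp hum).aemeasurable.mul
      (((hψl i).continuous.measurable.mul_const _).aemeasurable.mul h1)).ennreal_ofReal
  set Q : Euc N → ℝ≥0∞ := D.indicator fun y => ENNReal.ofReal (Lam * C) * ‖u y‖ₑ with hQ
  have hQm : Measurable Q := (hum.enorm.const_mul _).indicator hDo.measurableSet
  have hpt : ∀ᵐ y ∂volume.restrict Ω, ENNReal.ofReal (|u y| * φ y (gradient χ y)) ≤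
      ∑ i, (Q y + (S i).indicator (P i) y) := by
    have hd1 : ∀ᵐ y ∂volume.restrict Ω, ∀ i, DifferentiableAt ℝ (G i) y :=
      ae_all_iff.2 fun i => ae_restrict_of_ae (hL i).toG.lip.ae_differentiableAt
    have hd2 : ∀ᵐ y ∂volume.restrict Ω, ∀ i, DifferentiableAt ℝ (hh i) y :=
      ae_all_iff.2 fun i => ae_restrict_of_ae (hhl i).ae_differentiableAt
    filter_upwards [hd1, hd2, ae_restrict_mem hΩo.measurableSet] with y hy1 hy2 hyΩ
    have hyc : y ∈ closure Ω := subset_closure hyΩ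
    have h1 : φ y (gradient χ y) ≤ ∑ i, (hh i y * φ y (gradient (ψ i) y) +
        ψ i y * φ y (gradient (hh i) y)) := by
      rw [hχdef, gradient_sum_mul _ (fun i _ => hψd i y) (fun i _ => hy2 i)]
      refine (hφ.sum_le hyc _ _).trans (Finset.sum_le_sum fun i _ => ?_)
      refine (hφ.add_le hyc _ _).trans (le_of_eq ?_)
      rw [hφhom y hyc, hφhom y hyc, abs_of_nonneg (hh01 i y).1, abs_of_nonneg (hψ0 i y)]
    have h2 : |u y| * φ y (gradient χ y) ≤ ∑ i, (|u y| * (hh i y * φ y (gradient (ψ i) y)) +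
        |u y| * (ψ i y * φ y (gradient (hh i) y))) := by
      simp_rw [← mul_add]
      rw [← Finset.mul_sum]
      exact mul_le_mul_of_nonneg_left h1 (abs_nonneg _)
    have hn1 : ∀ i, 0 ≤ |u y| * (hh i y * φ y (gradient (ψ i) y)) := fun i =>
      mul_nonneg (abs_nonneg _) (mul_nonneg (hh01 i y).1 (hφ.nonneg hyc _))
    have hn2 : ∀ i, 0 ≤ |u y| * (ψ i y * φ y (gradient (hh i) y)) := fun i =>
      mul_nonneg (abs_nonneg _) (mul_nonneg (hψ0 i y) (hφ.nonneg hyc _))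
    refine (ENNReal.ofReal_le_ofReal h2).trans ?_
    rw [ENNReal.ofReal_sum_of_nonneg fun i _ => add_nonneg (hn1 i) (hn2 i)]
    refine Finset.sum_le_sum fun i _ => ?_
    refine ENNReal.ofReal_add_le.trans (add_le_add ?_ ?_)
    · by_cases hyD : y ∈ D
      · simp only [hQ, Set.indicator_of_mem hyD]
        rw [← ofReal_norm, Real.norm_eq_abs, ← ENNReal.ofReal_mul (by positivity)]
        refine ENNReal.ofReal_le_ofReal ?_
        have h3 : φ y (gradient (ψ i) y) ≤ Lam * C := by
          refine ((hφb y hyc _).2).trans ?_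
          have : ‖gradient (ψ i) y‖ ≤ C := by
            rw [gradient, LinearIsometryEquiv.norm_map]
            exact norm_fderiv_le_of_lipschitz ℝ (hψl i)
          gcongr
        have h4 : hh i y * φ y (gradient (ψ i) y) ≤ 1 * (Lam * C) := by
          have := (hh01 i y).2
          have := hφ.nonneg hyc (gradient (ψ i) y)
          gcongr
        rw [one_mul] at h4
        rw [mul_comm]
        gcongr
      · have : hh i y * φ y (gradient (ψ i) y) = 0 := by
          by_cases hyt : y ∈ tsupport (ψ i)
          · have : hh i y = 0 := by
              refine prof_zero hε ?_
              by_contra hlt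
              obtain ⟨p, hp, hyp⟩ := hgeo i y hyt hyΩ (not_le.1 hlt)
              exact hyD ⟨hyΩ, mem_thickening_iff.2 ⟨p, hp, hyp⟩⟩
            rw [this, zero_mul]
          · have : fderiv ℝ (ψ i) y = 0 := fderiv_of_notMem_tsupport ℝ hyt
            rw [gradient, this, map_zero, hφ.zero hyc, mul_zero]
        rw [this]; simp
    · rw [hhdef, (hL i).toG.gradient_prof hε (hy1 i)]
      split_ifs with hyS
      · rw [Set.indicator_of_mem (show y ∈ S i from hyS), hφhom y hyc, abs_neg,
          abs_of_pos (inv_pos.2 hε), ← mul_assoc (ψ i y)]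
      · rw [hφ.zero hyc]; simp
  refine (lintegral_mono_ae hpt).trans ?_
  have hadd : ∀ i ∈ Finset.univ, AEMeasurable (fun y => Q y + (S i).indicator (P i) y)
      (volume.restrict Ω) := fun i _ => hQm.aemeasurable.add ((hPm i).indicator (hSm i))
  rw [lintegral_finsetSum' _ hadd]
  have hone : ∀ i, ∫⁻ y in Ω, (Q y + (S i).indicator (P i) y) ≤
      (ENNReal.ofReal (Lam * C) * (∫⁻ y in D, ‖u y‖ₑ) +
        (ENNReal.ofReal (2 * C * Lam * M) * (∫⁻ y in D, ‖u y‖ₑ)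
        + ENNReal.ofReal (4 * Lam * M / lam * δ))) +
      ENNReal.ofReal (1 + η) * ∫⁻ x in frontier Ω, ENNReal.ofReal (ψ i x) *
            ENNReal.ofReal (φ x (ν x) * |f x|) ∂(μH[(N:ℝ) - 1] : Measure (Euc N)) := by
    intro i
    rw [lintegral_add_left hQm, add_assoc]
    refine add_le_add ?_ ?_
    · rw [lintegral_indicator hDo.measurableSet, lintegral_const_mul' _ _ ENNReal.ofReal_ne_top]
      gcongr
      exact Measure.restrict_le_self
    · rw [lintegral_indicator (hSm i)]
      refine le_trans (lintegral_mono' (Measure.restrict_mono le_rfl Measure.restrict_le_self)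
        le_rfl) ?_
      exact (hL i).local_bound hφ hΩo hum hu hK (hψl i) (hψ01 i) hε
        (fun y hy => (ball_subset_ball hερ).trans (hψU i y (hts i y hy))) hKt hη hcomp htr hν
  refine (Finset.sum_le_sum fun i _ => hone i).trans ?_
  rw [Finset.sum_add_distrib, ← Finset.mul_sum]
  gcongr
  refine (sum_setLIntegral_le _ _ _).trans (lintegral_mono fun x => ?_)
  simp only
  rw [← Finset.sum_mul, ← ENNReal.ofReal_sum_of_nonneg fun i _ => hψ0 i x]
  refine mul_le_of_le_one_left' ?_
  rw [ENNReal.ofReal_le_one]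
  exact hψ1 x

lemma phiTV_congr {N : ℕ} {φ : Euc N → Euc N → ℝ} {Ω : Set (Euc N)} {u w : Euc N → ℝ}
    (h : u =ᵐ[volume.restrict Ω] w) : phiTV φ Ω u = phiTV φ Ω w := by
  unfold phiTV
  have : ∀ z : Euc N → Euc N, ∫ x in Ω, u x * divg z x = ∫ x in Ω, w x * divg z x := fun z =>
    integral_congr_ae (h.mono fun x hx => by simp only [hx])
  simp only [this]

lemma tendsto_layer {N : ℕ} {Ω : Set (Euc N)} (hΩo : IsOpen Ω) {u : Euc N → ℝ}
    (hu : Integrable u volume) :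
    Tendsto (fun r => ∫⁻ y in Ω ∩ thickening r (frontier Ω), ‖u y‖ₑ) (𝓝[>] 0) (𝓝 0) := by
  set μ : Measure (Euc N) := (volume.restrict Ω).withDensity fun y => ‖u y‖ₑ with hμ
  have hval : ∀ s, MeasurableSet s → μ s = ∫⁻ y in Ω ∩ s, ‖u y‖ₑ := by
    intro s hs
    rw [hμ, withDensity_apply _ hs, Measure.restrict_restrict hs, inter_comm]
  have hfin : ∃ R > 0, μ (thickening R (frontier Ω)) ≠ ∞ := by
    refine ⟨1, one_pos, ?_⟩
    rw [hval _ isOpen_thickening.measurableSet]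
    exact (lt_of_le_of_lt (setLIntegral_le_lintegral _ _) hu.2).ne
  have := tendsto_measure_thickening_of_isClosed hfin isClosed_frontier
  rw [hval _ isClosed_frontier.measurableSet, hΩo.inter_frontier_eq] at this
  simp only [Measure.restrict_empty, lintegral_zero_measure] at this
  refine this.congr fun r => hval _ isOpen_thickening.measurableSet

lemma main_meas {N : ℕ} {φ : Euc N → Euc N → ℝ} {Ω : Set (Euc N)} {lam Lam : ℝ}
    (hφ : MetricIntegrand φ Ω lam Lam) (hΩo : IsOpen Ω) (hΩb : Bornology.IsBounded Ω)
    (hΩl : HasLipschitzBoundary Ω)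
    {u f : Euc N → ℝ} {ν : Euc N → Euc N} (hum : Measurable u) (hu : Integrable u volume)
    (hu2 : phiTV φ Ω u ≠ ⊤)
    (hlg : IsPhiLeastGradient φ Ω u) (htr : IsTrace Ω u f) (hν : IsOuterUnitNormal Ω ν) :
    phiTV φ Ω u ≤ ∫⁻ x in frontier Ω, ENNReal.ofReal (φ x (ν x) * |f x|)
        ∂(μH[(N : ℝ) - 1] : Measure (Euc N)) := by
  obtain ⟨ι, _, e, G, M, U, ψ, C, ρ, hρ, hL, hψl, hψd, hψ0, hψ1, hψf, hψU⟩ :=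
    exists_charts hΩb hΩl
  set R := ∫⁻ x in frontier Ω, ENNReal.ofReal (φ x (ν x) * |f x|)
        ∂(μH[(N : ℝ) - 1] : Measure (Euc N)) with hR
  have key : ∀ δ : ℝ, 0 < δ → phiTV φ Ω u ≤ ENNReal.ofReal δ +
      (∑ _i : ι, (ENNReal.ofReal (Lam * C) * ENNReal.ofReal δ +
        (ENNReal.ofReal (2 * C * Lam * M) * ENNReal.ofReal δ
        + ENNReal.ofReal (4 * Lam * M / lam * δ)))) + ENNReal.ofReal (1 + δ) * R := by
    intro δ hδ
    obtain ⟨K, hKc, hKΩ, hK⟩ := exists_compact_small hu.integrableOn hu2 hδ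
    obtain ⟨τ, hτ, hcomp⟩ := hφ.exists_comp hΩb hδ
    obtain ⟨κ, hκ, hKt⟩ := hKc.exists_thickening_subset_open hΩo hKΩ
    have hlay := (tendsto_layer hΩo hu).eventually
      (ge_mem_nhds (ENNReal.ofReal_pos.2 hδ))
    have hmin : 0 < min (min (ρ / 4) (κ / 2)) τ := by positivity
    obtain ⟨r, hr1, hr2⟩ := (hlay.and (Ioo_mem_nhdsGT hmin)).exists
    have hr0 : 0 < r := hr2.1
    have hrm := hr2.2
    simp only [lt_min_iff] at hrm
    obtain ⟨⟨hrρ, hrκ⟩, hrτ⟩ := hrm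
    have hb := eps_bound hφ hΩo hΩb hum hu hlg htr hν hδ.le hK hρ hL hψl hψd hψ0 hψ1 hψf hψU
      (ε := r / 2) (by positivity) (by linarith)
      ((thickening_mono (by linarith) _).trans hKt) hδ.le
      (fun y hy p hp hd => hcomp y hy p hp (by linarith))
    have h2 : 2 * (r / 2) = r := by ring
    rw [h2] at hb
    refine hb.trans ?_
    gcongr
  have h0 : Tendsto (fun δ : ℝ => δ) (𝓝[>] (0:ℝ)) (𝓝 0) := tendsto_nhdsWithin_of_tendsto_nhds tendsto_id
  have hof : ∀ c : ℝ, Tendsto (fun δ : ℝ => ENNReal.ofReal (c * δ)) (𝓝[>] (0:ℝ)) (𝓝 0) := by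
    intro c
    have := ENNReal.tendsto_ofReal (h0.const_mul c)
    simpa using this
  have hof1 : Tendsto (fun δ : ℝ => ENNReal.ofReal δ) (𝓝[>] (0:ℝ)) (𝓝 0) := by
    simpa using hof 1
  have hmul : ∀ c : ℝ, Tendsto (fun δ : ℝ => ENNReal.ofReal c * ENNReal.ofReal δ)
      (𝓝[>] (0:ℝ)) (𝓝 0) := by
    intro c
    have := ENNReal.Tendsto.const_mul (a := ENNReal.ofReal c) hof1 (Or.inr ENNReal.ofReal_ne_top)
    simpa using this
  have hlast : Tendsto (fun δ : ℝ => ENNReal.ofReal (1 + δ) * R) (𝓝[>] (0:ℝ)) (𝓝 R) := by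
    have h1 : Tendsto (fun δ : ℝ => ENNReal.ofReal (1 + δ)) (𝓝[>] (0:ℝ)) (𝓝 1) := by
      have := ENNReal.tendsto_ofReal (h0.const_add 1)
      simpa using this
    have := ENNReal.Tendsto.mul_const (b := R) h1 (Or.inl one_ne_zero)
    simpa using this
  have hsum : Tendsto (fun δ : ℝ => ∑ _i : ι, (ENNReal.ofReal (Lam * C) * ENNReal.ofReal δ +
        (ENNReal.ofReal (2 * C * Lam * M) * ENNReal.ofReal δ
        + ENNReal.ofReal (4 * Lam * M / lam * δ)))) (𝓝[>] (0:ℝ)) (𝓝 0) := by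
    have := tendsto_finsetSum (Finset.univ : Finset ι) fun i _ =>
      (hmul (Lam * C)).add ((hmul (2 * C * Lam * M)).add (hof (4 * Lam * M / lam)))
    simpa using this
  have hall := (hof1.add hsum).add hlast
  rw [add_zero, zero_add] at hall
  refine ge_of_tendsto hall ?_
  filter_upwards [self_mem_nhdsWithin] with δ hδ using key δ hδ

theorem phiTV_le_boundary_integral {N : ℕ} (Ω : Set (Euc N)) (hΩo : IsOpen Ω)
    (hΩb : Bornology.IsBounded Ω) (hΩl : HasLipschitzBoundary Ω)
    (φ : Euc N → Euc N → ℝ) (lam Lam : ℝ) (hφ : MetricIntegrand φ Ω lam Lam)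
    (u f : Euc N → ℝ) (ν : Euc N → Euc N)
    (hu1 : IntegrableOn u Ω volume) (hu2 : phiTV φ Ω u ≠ ⊤)
    (hlg : IsPhiLeastGradient φ Ω u) (htr : IsTrace Ω u f)
    (hν : IsOuterUnitNormal Ω ν) :
    phiTV φ Ω u ≤
      ∫⁻ x in frontier Ω, ENNReal.ofReal (φ x (ν x) * |f x|)
        ∂(μH[(N : ℝ) - 1] : Measure (Euc N)) := by
  set w : Euc N → ℝ := Ω.indicator (hu1.1.mk u) with hw
  have hwm : Measurable w := hu1.1.stronglyMeasurable_mk.measurable.indicator hΩo.measurableSet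
  have huw : u =ᵐ[volume.restrict Ω] w := by
    filter_upwards [hu1.1.ae_eq_mk, ae_restrict_mem hΩo.measurableSet] with x hx hxΩ
    rw [hw, indicator_of_mem hxΩ, hx]
  have hwi : Integrable w volume := by
    rw [hw, integrable_indicator_iff hΩo.measurableSet]
    exact hu1.congr hu1.1.ae_eq_mk
  rw [phiTV_congr huw] at hu2 ⊢
  refine main_meas hφ hΩo hΩb hΩl hwm hwi hu2 ?_ ?_ hν
  · intro v hv1 hv2
    rw [← phiTV_congr huw, ← phiTV_congr (u := u + v) (w := w + v) (huw.mono fun x hx => by simp [hx])]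
    exact hlg v hv1 hv2
  · refine htr.mono fun x hx => hx.congr fun r => ?_
    refine average_congr ?_
    refine (ae_restrict_of_ae_restrict_of_subset inter_subset_right huw).mono fun y hy => ?_
    simp only [hy]
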